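/- For d ≥ 3 define N_d = 3d² if d ∉ {4,6,8,12,20}, and N_4 = 64, N_6 = 180, N_8 = 256, N_12 = 864, N_20 = 1600. Then: (i) every smooth surface S : φ(x,y) − ψ(z,t) = 0 with φ, ψ homogeneous binary forms of degree d contains at most N_d lines; and (ii) there exist homogeneous binary forms φ, ψ of degree d such that the surface φ(x,y) − ψ(z,t) = 0 is smooth and contains exactly N_d lines. -/

import Mathlib

/-!
A line on `φ(x,y) = ψ(z,t)` is a plane `W ⊆ ℂ² × ℂ²`. Since `φ` and `ψ` are squarefree, each has
`d` zeros on the projective line (`ncard_zeroPts`). If `W` meets one of the two factors, it is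
the product of a zero of `φ` and a zero of `ψ`, which gives `d²` lines; otherwise it is the graph
of a linear isomorphism carrying `φ` to `ψ` (`classify`, `card_lines`). The set of such
isomorphisms is empty or a coset of the stabiliser `formStab φ`, and the scalars in the stabiliser
are the `d`-th roots of unity, so that `|formStab φ| = d |projSym φ|`, where `projSym φ` is the
induced finite group of projective symmetries (`card_formStab`). Hence the number of lines is at
most `d² + d |projSym φ|`, with equality when `ψ = φ`.

A nontrivial element of finite order in `PGL₂(ℂ)` has exactly two fixed points. Counting orbits of
such fixed points (poles) as in Klein's classification of finite rotation groups, a group `G`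
preserving `d ≥ 3` points has order at most `2d`, except for `(d, |G|)` equal to `(4, 12)`,
`(6, 24)`, `(8, 24)`, `(12, 60)` or `(20, 60)` (`card_le_of_fixedBy`): an orbit of more than two
points and fewer than `|G| / 2` is the set of vertices, or of face centres, of a regular
polyhedron. This is the upper bound.

The bound is attained with `ψ = φ` by `x ^ d + y ^ d` in general and by the forms vanishing at the
vertices of a tetrahedron, octahedron, cube, icosahedron and dodecahedron in the exceptional
degrees. By the dichotomy above it is enough to know that their groups have order at least `2d`,
respectively more than `2d`. That follows by exhibiting a rotation about the point `0` and enough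
points in the orbit of `0`.
-/

open MvPolynomial

/-- A line in ℙ³: a 2-dimensional linear subspace of ℂ⁴. -/
def IsLine (W : Submodule ℂ (Fin 4 → ℂ)) : Prop :=
  Module.finrank ℂ W = 2

/-- The line `W` lies on the surface `F = 0`. -/
def LiesOn (F : MvPolynomial (Fin 4) ℂ) (W : Submodule ℂ (Fin 4 → ℂ)) : Prop :=
  ∀ v ∈ W, eval v F = 0

/-- The surface `F = 0` is smooth: no nonzero point where all partials vanish. -/
def SmoothSurface (F : MvPolynomial (Fin 4) ℂ) : Prop :=
  ∀ v : Fin 4 → ℂ, v ≠ 0 → ∃ i : Fin 4, eval v (pderiv i F) ≠ 0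

/-- The polynomial `φ(x,y) - ψ(z,t)` in four variables. -/
noncomputable def sepForm (φ ψ : MvPolynomial (Fin 2) ℂ) : MvPolynomial (Fin 4) ℂ :=
  rename (fun i : Fin 2 => (⟨i.val, by omega⟩ : Fin 4)) φ -
    rename (fun i : Fin 2 => (⟨i.val + 2, by omega⟩ : Fin 4)) ψ

/-- The maximal number of lines on a smooth surface of the form `φ(x,y) - ψ(z,t) = 0`
of degree `d`. -/
def maxLines (d : ℕ) : ℕ :=
  if d = 4 then 64 else if d = 6 then 180 else if d = 8 then 256
  else if d = 12 then 864 else if d = 20 then 1600 else 3 * d ^ 2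

/-! ### Binary forms and their zeros on the projective line -/

open scoped LinearAlgebra.Projectivization

/-- The plane `ℂ²` on which binary forms are evaluated. -/
abbrev V2 := Fin 2 → ℂ

/-- The form `φ` has nowhere vanishing gradient on `ℂ² ∖ {0}`. -/
def Nonsing (φ : MvPolynomial (Fin 2) ℂ) : Prop :=
  ∀ v : V2, v ≠ 0 → ∃ i, eval v (pderiv i φ) ≠ 0

/-- The zeros of the binary form `φ` on the projective line. The choice of the representative
`p.rep` does not matter when `φ` is homogeneous (`mk_mem_zeroPts`). -/
def zeroPts (φ : MvPolynomial (Fin 2) ℂ) : Set (ℙ ℂ V2) := {p | eval p.rep φ = 0}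

theorem eval_smul_form {σ : Type*} {φ : MvPolynomial σ ℂ} {d : ℕ} (h : φ.IsHomogeneous d)
    (t : ℂ) (v : σ → ℂ) : eval (t • v) φ = t ^ d * eval v φ := by
  rw [φ.as_sum]
  simp only [eval_sum, eval_monomial, Finset.mul_sum]
  refine Finset.sum_congr rfl fun m hm => ?_
  have h1 : m.weight 1 = d := h (by simpa using hm)
  have h2 : m.degree = d := by rw [← h1, Finsupp.degree_eq_weight_one]; rfl
  simp only [Pi.smul_apply, smul_eq_mul, mul_pow, Finsupp.prod_mul]
  have : (m.prod fun _ e => t ^ e) = t ^ d := by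
    rw [Finsupp.prod, Finset.prod_pow_eq_pow_sum, ← h2]; rfl
  rw [this]; ring

theorem mk_mem_zeroPts {φ : MvPolynomial (Fin 2) ℂ} {d : ℕ} (h : φ.IsHomogeneous d)
    {v : V2} (hv : v ≠ 0) :
    Projectivization.mk ℂ v hv ∈ zeroPts φ ↔ eval v φ = 0 := by
  obtain ⟨a, ha⟩ := Projectivization.exists_smul_eq_mk_rep ℂ v hv
  rw [zeroPts, Set.mem_ofPred_eq, ← ha, Units.smul_def, eval_smul_form h]
  simp

/-- Euler's identity for binary forms. -/
theorem eval_euler {φ : MvPolynomial (Fin 2) ℂ} {d : ℕ} (h : φ.IsHomogeneous d) (v : V2) :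
    v 0 * eval v (pderiv 0 φ) + v 1 * eval v (pderiv 1 φ) = d * eval v φ := by
  have := congrArg (eval v) h.sum_X_mul_pderiv
  simpa [Fin.sum_univ_two] using this

/-- The dehomogenisation `φ(X, 1)`. -/
noncomputable def dehom (φ : MvPolynomial (Fin 2) ℂ) : Polynomial ℂ :=
  aeval ![Polynomial.X, 1] φ

theorem dehom_eval (φ : MvPolynomial (Fin 2) ℂ) (a : ℂ) :
    (dehom φ).eval a = eval ![a, 1] φ := by
  rw [dehom]
  induction φ using MvPolynomial.induction_on with
  | C c => simp
  | add p q hp hq => simp [hp, hq]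
  | mul_X p i hp => fin_cases i <;> simp [hp]

theorem dehom_derivative (φ : MvPolynomial (Fin 2) ℂ) :
    Polynomial.derivative (dehom φ) = dehom (pderiv 0 φ) := by
  rw [dehom, dehom]
  induction φ using MvPolynomial.induction_on with
  | C c => simp
  | add p q hp hq => simp [hp, hq]
  | mul_X p i hp => fin_cases i <;> simp [hp, pderiv_X]; ring

theorem homogenize_dehom {φ : MvPolynomial (Fin 2) ℂ} {d : ℕ} (h : φ.IsHomogeneous d) :
    (dehom φ).homogenize d = φ := Polynomial.homogenize_eq_of_isHomogeneous h rfl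

theorem natDegree_dehom_le {φ : MvPolynomial (Fin 2) ℂ} {d : ℕ} (h : φ.IsHomogeneous d) :
    (dehom φ).natDegree ≤ d := by
  rw [dehom, φ.as_sum, map_sum]
  refine Polynomial.natDegree_sum_le_of_forall_le _ _ fun m hm => ?_
  have h1 : m.weight 1 = d := h (by simpa using hm)
  have h2 : m.degree = d := by rw [← h1, Finsupp.degree_eq_weight_one]; rfl
  have h3 : m 0 + m 1 = d := by rw [← h2, Finsupp.degree_eq_sum]; simp
  rw [aeval_monomial, Finsupp.prod_fintype _ _ (by simp)]
  simp only [Fin.prod_univ_two, Matrix.cons_val_zero, Matrix.cons_val_one, one_pow, mul_one]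
  refine (Polynomial.natDegree_C_mul_X_pow_le _ _).trans (by omega)

theorem coeff_dehom_top {φ : MvPolynomial (Fin 2) ℂ} {d : ℕ} (h : φ.IsHomogeneous d) :
    (dehom φ).coeff d = eval ![1, 0] φ := by
  conv_rhs => rw [← homogenize_dehom h, Polynomial.homogenize]
  rw [eval_sum, Finset.sum_eq_single (d, 0)]
  · simp [eval_monomial, Finsupp.prod_fintype]
  · rintro ⟨k, l⟩ hkl hne
    have : l ≠ 0 := by
      rintro rfl; simp at hkl; exact hne (by simp [hkl])
    simp [eval_monomial, Finsupp.prod_fintype, this]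
  · simp

theorem coeff_dehom_pred {φ : MvPolynomial (Fin 2) ℂ} {d : ℕ} (hd : 1 ≤ d)
    (h : φ.IsHomogeneous d) :
    (dehom φ).coeff (d - 1) = eval ![1, 0] (pderiv 1 φ) := by
  conv_rhs => rw [← homogenize_dehom h, Polynomial.homogenize]
  rw [map_sum, eval_sum, Finset.sum_eq_single (d - 1, 1)]
  · simp [eval_monomial, Finsupp.prod_fintype, pderiv_monomial]
  · rintro ⟨k, l⟩ hkl hne
    have hkl : k + l = d := Finset.HasAntidiagonal.mem_antidiagonal.1 hkl
    have : l ≠ 1 := by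
      rintro rfl
      exact hne (by rw [← hkl]; rfl)
    rcases Nat.eq_zero_or_pos l with rfl | hl
    · simp [pderiv_monomial]
    · have : l - 1 ≠ 0 := by omega
      simp [eval_monomial, Finsupp.prod_fintype, pderiv_monomial, this]
  · intro h; exact absurd (by simp; omega) h

theorem pt_ne (a : ℂ) : (![a, 1] : V2) ≠ 0 := fun h => by simpa using congrFun h 1

theorem inf_ne : (![1, 0] : V2) ≠ 0 := fun h => by simpa using congrFun h 0

/-- The affine points of the projective line, `a ↦ [a : 1]`. -/
noncomputable def pt (a : ℂ) : ℙ ℂ V2 := Projectivization.mk ℂ ![a, 1] (pt_ne a)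

/-- The point at infinity `[1 : 0]`. -/
noncomputable def ptInf : ℙ ℂ V2 := Projectivization.mk ℂ ![1, 0] inf_ne

theorem pt_injective : Function.Injective pt := by
  intro a b h
  obtain ⟨c, hc⟩ := (Projectivization.mk_eq_mk_iff' ..).1 h
  have h0 := congrFun hc 0
  have h1 := congrFun hc 1
  simp at h0 h1
  rw [h1] at h0; simpa using h0.symm

theorem ptInf_ne_pt (a : ℂ) : ptInf ≠ pt a := by
  intro h
  obtain ⟨c, hc⟩ := (Projectivization.mk_eq_mk_iff' ..).1 h
  have h0 := congrFun hc 0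
  have h1 := congrFun hc 1
  simp at h0 h1
  simp [h1] at h0

theorem mk_eq_pt {v : V2} (hv : v ≠ 0) (h1 : v 1 ≠ 0) :
    Projectivization.mk ℂ v hv = pt (v 0 / v 1) := by
  refine (Projectivization.mk_eq_mk_iff' ..).2 ⟨v 1, ?_⟩
  ext i; fin_cases i <;> simp
  field_simp

theorem mk_eq_ptInf {v : V2} (hv : v ≠ 0) (h1 : v 1 = 0) :
    Projectivization.mk ℂ v hv = ptInf := by
  refine (Projectivization.mk_eq_mk_iff' ..).2 ⟨v 0, ?_⟩
  ext i; fin_cases i <;> simp [h1]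

theorem eq_ptInf_or_pt (p : ℙ ℂ V2) : p = ptInf ∨ ∃ a, p = pt a := by
  induction p using Projectivization.ind with
  | h v hv =>
    by_cases h1 : v 1 = 0
    · exact Or.inl (mk_eq_ptInf hv h1)
    · exact Or.inr ⟨_, mk_eq_pt hv h1⟩

/-- A binary form of degree `d` with nowhere vanishing gradient has exactly `d` zeros: the
dehomogenisation has simple roots, and its degree is `d` or `d - 1` according to whether the
point at infinity is a zero. -/
theorem ncard_zeroPts {φ : MvPolynomial (Fin 2) ℂ} {d : ℕ} (hd : 1 ≤ d)
    (h : φ.IsHomogeneous d) (hs : Nonsing φ) : (zeroPts φ).ncard = d := by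
  have hd0 : (d : ℂ) ≠ 0 := by exact_mod_cast (by omega : d ≠ 0)
  set p := dehom φ with hp
  have hroot : ∀ a, pt a ∈ zeroPts φ ↔ p.eval a = 0 := fun a => by
    rw [pt, mk_mem_zeroPts h, hp, dehom_eval]
  have hinf : ptInf ∈ zeroPts φ ↔ p.coeff d = 0 := by
    rw [ptInf, mk_mem_zeroPts h, hp, coeff_dehom_top h]
  have hpred : p.coeff d = 0 → p.coeff (d - 1) ≠ 0 := by
    intro h0
    rw [coeff_dehom_pred hd h]
    rw [hp, coeff_dehom_top h] at h0
    obtain ⟨i, hi⟩ := hs _ inf_ne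
    have he := eval_euler h ![1, 0]
    simp [h0] at he
    fin_cases i
    · exact absurd he hi
    · exact hi
  have hp0 : p ≠ 0 := by
    intro h0; rw [h0] at hpred; simp at hpred
  have hsep : p.roots.Nodup := by
    refine Multiset.nodup_iff_count_le_one.2 fun a => ?_
    rw [Polynomial.count_roots]
    by_contra! hlt
    obtain ⟨h1, h2⟩ := (Polynomial.one_lt_rootMultiplicity_iff_isRoot hp0).1 hlt
    rw [Polynomial.IsRoot.def, hp, dehom_derivative, dehom_eval] at h2
    rw [Polynomial.IsRoot.def, hp, dehom_eval] at h1
    obtain ⟨i, hi⟩ := hs _ (pt_ne a)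
    have he := eval_euler h ![a, 1]
    simp [h1, h2] at he
    fin_cases i
    · exact hi h2
    · exact hi he
  have hdeg : p.natDegree ≤ d := natDegree_dehom_le h
  have hcard : p.roots.toFinset.card = p.natDegree := by
    rw [Multiset.toFinset_card_of_nodup hsep]
    exact (IsAlgClosed.splits p).natDegree_eq_card_roots.symm
  have himg : (pt '' {a | p.eval a = 0}).ncard = p.natDegree := by
    rw [Set.ncard_image_of_injective _ pt_injective, ← hcard, ← Set.ncard_coe_finset]
    congr 1; ext a; simp [hp0]
  by_cases h0 : p.coeff d = 0
  · have hnd : p.natDegree = d - 1 := by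
      apply le_antisymm
      · have : p.natDegree ≠ d := by
          intro h1; rw [← h1] at h0; simp [hp0] at h0
        omega
      · exact Polynomial.le_natDegree_of_ne_zero (hpred h0)
    have : zeroPts φ = insert ptInf (pt '' {a | p.eval a = 0}) := by
      ext q
      rcases eq_ptInf_or_pt q with rfl | ⟨a, rfl⟩
      · simp [hinf, h0]
      · simp [hroot, pt_injective.eq_iff, (ptInf_ne_pt a).symm]
    have hfin : (pt '' {a | p.eval a = 0}).Finite :=
      Set.Finite.image _ ((p.roots.toFinset.finite_toSet).subset fun a ha => by
        simpa [hp0] using ha)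
    rw [this, Set.ncard_insert_of_notMem _ hfin, himg, hnd]
    · omega
    · rintro ⟨a, -, ha⟩; exact ptInf_ne_pt a ha.symm
  · have hnd : p.natDegree = d :=
      le_antisymm hdeg (Polynomial.le_natDegree_of_ne_zero h0)
    have : zeroPts φ = (pt '' {a | p.eval a = 0}) := by
      ext q
      rcases eq_ptInf_or_pt q with rfl | ⟨a, rfl⟩
      · simp only [hinf, h0, false_iff]
        rintro ⟨a, -, ha⟩; exact ptInf_ne_pt a ha.symm
      · simp [hroot, pt_injective.eq_iff]
    rw [this, himg, hnd]

/-! ### Smoothness of the surface -/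

/-- The decomposition `ℂ⁴ = ℂ² × ℂ²` into the coordinates `(x, y)` and `(z, t)`. -/
def splitEquiv : (Fin 4 → ℂ) ≃ₗ[ℂ] V2 × V2 where
  toFun v := (![v 0, v 1], ![v 2, v 3])
  invFun p := ![p.1 0, p.1 1, p.2 0, p.2 1]
  map_add' v w := by ext i <;> fin_cases i <;> simp
  map_smul' c v := by ext i <;> fin_cases i <;> simp
  left_inv v := by ext i; fin_cases i <;> simp
  right_inv p := by ext i <;> fin_cases i <;> simp

theorem comp_left (v : Fin 4 → ℂ) :
    (v ∘ fun i : Fin 2 => (⟨i.val, by omega⟩ : Fin 4)) = (splitEquiv v).1 := by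
  ext i; fin_cases i <;> rfl

theorem comp_right (v : Fin 4 → ℂ) :
    (v ∘ fun i : Fin 2 => (⟨i.val + 2, by omega⟩ : Fin 4)) = (splitEquiv v).2 := by
  ext i; fin_cases i <;> rfl

theorem eval_sepForm (φ ψ : MvPolynomial (Fin 2) ℂ) (v : Fin 4 → ℂ) :
    eval v (sepForm φ ψ) = eval (splitEquiv v).1 φ - eval (splitEquiv v).2 ψ := by
  rw [sepForm, map_sub, eval_rename, eval_rename, comp_left, comp_right]

theorem pderiv_rename_of_notMem {σ τ : Type*} {f : σ → τ} (i : τ) (hi : i ∉ Set.range f)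
    (p : MvPolynomial σ ℂ) : pderiv i (rename f p) = 0 := by
  classical
  refine pderiv_eq_zero_of_notMem_vars fun h => ?_
  obtain ⟨j, -, rfl⟩ := Finset.mem_image.1 (vars_rename f p h)
  exact hi ⟨j, rfl⟩

theorem eval_pderiv_left (φ ψ : MvPolynomial (Fin 2) ℂ) (v : Fin 4 → ℂ) (i : Fin 2) :
    eval v (pderiv (⟨i.val, by omega⟩ : Fin 4) (sepForm φ ψ)) =
      eval (splitEquiv v).1 (pderiv i φ) := by
  rw [sepForm, map_sub, pderiv_rename_of_notMem _ _ ψ, sub_zero,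
    pderiv_rename (f := fun i : Fin 2 => (⟨i.val, by omega⟩ : Fin 4)), eval_rename, comp_left]
  · intro a b h; simpa [Fin.ext_iff] using h
  · rintro ⟨j, hj⟩; simp only [Fin.ext_iff] at hj; omega

theorem eval_pderiv_right (φ ψ : MvPolynomial (Fin 2) ℂ) (v : Fin 4 → ℂ) (i : Fin 2) :
    eval v (pderiv (⟨i.val + 2, by omega⟩ : Fin 4) (sepForm φ ψ)) =
      - eval (splitEquiv v).2 (pderiv i ψ) := by
  rw [sepForm, map_sub, pderiv_rename_of_notMem _ _ φ, zero_sub,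
    pderiv_rename (f := fun i : Fin 2 => (⟨i.val + 2, by omega⟩ : Fin 4)), map_neg, eval_rename,
    comp_right]
  · intro a b h; simpa [Fin.ext_iff] using h
  · rintro ⟨j, hj⟩; simp only [Fin.ext_iff] at hj; omega

theorem eval_pderiv_zero {φ : MvPolynomial (Fin 2) ℂ} {d : ℕ} (hd : 2 ≤ d)
    (h : φ.IsHomogeneous d) (i : Fin 2) : eval (0 : V2) (pderiv i φ) = 0 := by
  have := eval_smul_form (h.pderiv (i := i)) 0 0
  rw [zero_pow (by omega)] at this
  simpa using this

/-- Smoothness of `φ(x,y) = ψ(z,t)` means that both binary forms are squarefree. -/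
theorem smooth_iff {φ ψ : MvPolynomial (Fin 2) ℂ} {d : ℕ} (hd : 2 ≤ d)
    (hφ : φ.IsHomogeneous d) (hψ : ψ.IsHomogeneous d) :
    SmoothSurface (sepForm φ ψ) ↔ Nonsing φ ∧ Nonsing ψ := by
  constructor
  · intro hs
    have key : ∀ v : Fin 4 → ℂ, v ≠ 0 → (∃ i, eval (splitEquiv v).1 (pderiv i φ) ≠ 0) ∨
        (∃ i, eval (splitEquiv v).2 (pderiv i ψ) ≠ 0) := by
      intro v hv
      obtain ⟨i, hi⟩ := hs v hv
      by_cases h2 : i.val < 2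
      · refine Or.inl ⟨⟨i.val, h2⟩, ?_⟩
        rw [← eval_pderiv_left φ ψ]; exact hi
      · refine Or.inr ⟨⟨i.val - 2, by omega⟩, ?_⟩
        rw [← neg_ne_zero, ← eval_pderiv_right φ ψ]
        convert hi using 4
        simp only [Fin.ext_iff]; omega
    constructor
    · intro v hv
      rcases key (splitEquiv.symm (v, 0)) (by simpa using hv) with h | ⟨i, hi⟩
      · simpa using h
      · exact absurd (by simpa using eval_pderiv_zero hd hψ i) hi
    · intro v hv
      rcases key (splitEquiv.symm (0, v)) (by simpa using hv) with ⟨i, hi⟩ | h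
      · exact absurd (by simpa using eval_pderiv_zero hd hφ i) hi
      · simpa using h
  · rintro ⟨h1, h2⟩ v hv
    by_cases hv1 : (splitEquiv v).1 = 0
    · have hv2 : (splitEquiv v).2 ≠ 0 := fun h => hv (by
        rw [← map_eq_zero_iff splitEquiv splitEquiv.injective]; exact Prod.ext hv1 h)
      obtain ⟨i, hi⟩ := h2 _ hv2
      exact ⟨_, by rw [eval_pderiv_right φ ψ v i]; simpa using hi⟩
    · obtain ⟨i, hi⟩ := h1 _ hv1
      exact ⟨_, by rw [eval_pderiv_left φ ψ v i]; exact hi⟩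

/-! ### Orbit counting -/

/-- The case of three orbits of poles, of sizes `a`, `b`, `c` and with stabilisers of orders `ea`,
`eb`, `ec`: the equation `1/ea + 1/eb + 1/ec = 1 + 2/N` leaves only the rotation groups of the
regular polyhedra once `ea ≥ 3` and `a ≥ 3`. -/
theorem arith3 {N a b c ea eb ec d : ℕ} (ha : a * ea = N) (hb : b * eb = N) (hc : c * ec = N)
    (h2b : 2 ≤ eb) (h2c : 2 ≤ ec) (hsum : a + b + c = N + 2) (hd : 3 ≤ a) (hN : 2 * a < N)
    (had : a = d) :
    (d = 4 ∧ N = 12) ∨ (d = 6 ∧ N = 24) ∨ (d = 8 ∧ N = 24) ∨ (d = 12 ∧ N = 60) ∨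
      (d = 20 ∧ N = 60) := by
  subst had
  have h3 : 3 ≤ ea := by by_contra! h; interval_cases ea <;> omega
  -- after exchanging `b` and `c`, the orbit of size `b` has `eb = 2`
  wlog hbc : eb ≤ ec generalizing b c eb ec
  · exact this hc hb h2c h2b (by omega) (by omega)
  have h3a : 3 * a ≤ N := by rw [← ha]; nlinarith
  have heb : eb = 2 := by
    by_contra hne
    have h3b : 3 * b ≤ N := by rw [← hb]; nlinarith [show 3 ≤ eb by omega]
    have h3c : 3 * c ≤ N := by rw [← hc]; nlinarith [show 3 ≤ ec by omega]
    omega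
  subst heb
  have h3c : 3 ≤ ec := by by_contra! h; interval_cases ec; omega
  have h33 : ea = 3 ∨ ec = 3 := by
    by_contra! hne
    have h4a : 4 * a ≤ N := by rw [← ha]; nlinarith [show 4 ≤ ea by omega]
    have h4c : 4 * c ≤ N := by rw [← hc]; nlinarith [show 4 ≤ ec by omega]
    omega
  rcases h33 with rfl | rfl
  · have : ec < 6 := by
      by_contra! h6
      have : 6 * c ≤ N := by rw [← hc]; nlinarith
      omega
    interval_cases ec <;> omega
  · have : ea < 6 := by
      by_contra! h6
      have : 6 * a ≤ N := by rw [← ha]; nlinarith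
      omega
    interval_cases ea <;> omega

/-- The arithmetic behind Klein's classification of the finite rotation groups: `s` lists the
sizes of the orbits of poles of a group of order `N`, `e` the orders of their stabilisers, and
`T` is the set of orbits contained in an invariant set with `d` elements. -/
theorem arith_orbits {Ω : Type*} [Fintype Ω] [DecidableEq Ω] (s e : Ω → ℕ) {N d : ℕ}
    (hse : ∀ ω, s ω * e ω = N) (he : ∀ ω, 2 ≤ e ω) (hN : 1 ≤ N)
    (hsum : ∑ ω, s ω + 2 * (N - 1) = Fintype.card Ω * N) (T : Finset Ω)
    (hT : ∑ ω ∈ T, s ω = d) (hd : 3 ≤ d) (hdN : 2 * d < N) :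
    (d = 4 ∧ N = 12) ∨ (d = 6 ∧ N = 24) ∨ (d = 8 ∧ N = 24) ∨ (d = 12 ∧ N = 60) ∨
      (d = 20 ∧ N = 60) := by
  have h2 : ∀ ω, 2 * s ω ≤ N := fun ω => by
    rw [← hse ω, mul_comm]; exact Nat.mul_le_mul_left _ (he ω)
  have hcompl : ∑ ω, s ω = d + ∑ ω ∈ Tᶜ, s ω := by
    rw [← hT, Finset.sum_add_sum_compl]
  have hTc : 2 * ∑ ω ∈ Tᶜ, s ω ≤ Tᶜ.card * N := by
    rw [Finset.mul_sum]; exact Finset.sum_le_card_nsmul _ _ _ fun ω _ => h2 ω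
  have hcard : T.card + Tᶜ.card = Fintype.card Ω := Finset.card_add_card_compl T
  rw [← hcard, hcompl, add_mul] at hsum
  clear hcompl hcard
  generalize hS : ∑ ω ∈ Tᶜ, s ω = S at hsum hTc
  have hTpos : 1 ≤ T.card := by
    rw [Nat.one_le_iff_ne_zero, Ne, Finset.card_eq_zero]
    rintro rfl
    rw [Finset.sum_empty] at hT
    omega
  -- `(2 |T| + |Tᶜ|) N < 5 N`
  have hlt : 2 * T.card + Tᶜ.card < 5 := by
    by_contra! h
    have := Nat.mul_le_mul_right N h
    rw [add_mul, mul_assoc] at this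
    generalize T.card * N = A at *
    generalize Tᶜ.card * N = B at *
    omega
  have hcases : (T.card = 1 ∧ Tᶜ.card = 0) ∨ (T.card = 1 ∧ Tᶜ.card = 1) ∨
      (T.card = 1 ∧ Tᶜ.card = 2) ∨ (T.card = 2 ∧ Tᶜ.card = 0) := by omega
  rcases hcases with ⟨h1, h0⟩ | ⟨h1, h0⟩ | ⟨h1, h0⟩ | ⟨h1, h0⟩
  · rw [h1, h0] at hsum; rw [h0] at hTc; omega
  · rw [h1, h0] at hsum; rw [h0] at hTc; omega
  · obtain ⟨a, rfl⟩ := Finset.card_eq_one.1 h1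
    obtain ⟨b, c, hbc, hTcbc⟩ := Finset.card_eq_two.1 h0
    rw [hTcbc, Finset.sum_pair hbc] at hS
    rw [h1, h0] at hsum
    rw [Finset.sum_singleton] at hT
    exact arith3 (hse a) (hse b) (hse c) (he b) (he c) (by omega) (by omega) (by omega) hT
  · rw [h1, h0] at hsum; rw [h0] at hTc; omega

/-- The points fixed by some nontrivial element of `G` (the *poles*), as a set with
`G`-action. -/
def poles (G X : Type*) [Group G] [MulAction G X] : SubMulAction G X where
  carrier := {x | ∃ g : G, g ≠ 1 ∧ g • x = x}
  smul_mem' h x := by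
    rintro ⟨g, hg, hx⟩
    refine ⟨h * g * h⁻¹, fun h1 => hg ?_, ?_⟩
    · simpa using h1
    · rw [smul_smul, inv_mul_cancel_right, mul_smul, hx]

/-- Orbit counting: if every nontrivial element of the finite group `G` has exactly two fixed
points, and `G` preserves a set of `d ≥ 3` points, then `|G| ≤ 2d` apart from five
exceptions. -/
theorem card_le_of_fixedBy {G X : Type*} [Group G] [Finite G] [MulAction G X]
    (hfix : ∀ g : G, g ≠ 1 → (MulAction.fixedBy X g).ncard = 2) (Z : Set X)
    (hZ : ∀ (g : G), ∀ z ∈ Z, g • z ∈ Z) {d : ℕ} (hZd : Z.ncard = d) (hd : 3 ≤ d) :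
    Nat.card G ≤ 2 * d ∨ (d = 4 ∧ Nat.card G = 12) ∨ (d = 6 ∧ Nat.card G = 24) ∨
      (d = 8 ∧ Nat.card G = 24) ∨ (d = 12 ∧ Nat.card G = 60) ∨
      (d = 20 ∧ Nat.card G = 60) := by
  classical
  rw [or_iff_not_imp_left, not_le]
  intro hlt
  have := Fintype.ofFinite G
  set N := Nat.card G with hN
  have hZfin : Z.Finite := Set.finite_of_ncard_ne_zero (by omega)
  let P := poles G X
  have hPfin : (P : Set X).Finite := by
    have : (P : Set X) ⊆ ⋃ g ∈ {g : G | g ≠ 1}, MulAction.fixedBy X g := by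
      rintro x ⟨g, hg, hx⟩
      simp only [Set.mem_iUnion]
      exact ⟨g, hg, hx⟩
    refine Set.Finite.subset (Set.Finite.biUnion (Set.toFinite _) fun g hg => ?_) this
    exact Set.finite_of_ncard_ne_zero (by rw [hfix g hg]; norm_num)
  have : Finite P := hPfin
  have := Fintype.ofFinite P
  let Ω := MulAction.orbitRel.Quotient G P
  have := Fintype.ofFinite Ω
  -- the orbit of a point of `Z` is contained in `Z`, so it is too short to be free
  have hZP : Z ⊆ P := by
    intro z hz
    have horb : (MulAction.orbit G z) ⊆ Z := by
      rintro _ ⟨g, rfl⟩; exact hZ g z hz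
    have h1 : (MulAction.orbit G z).ncard ≤ d := hZd ▸ Set.ncard_le_ncard horb hZfin
    by_contra hzP
    have hst : MulAction.stabilizer G z = ⊥ := by
      rw [Subgroup.eq_bot_iff_forall]
      intro g hg
      by_contra hne
      exact hzP ⟨g, hne, hg⟩
    have h2 := MulAction.index_stabilizer G z
    rw [hst, Subgroup.index_bot] at h2
    omega
  -- orbit sizes and stabiliser orders
  let s : Ω → ℕ := fun ω => Nat.card ω.orbit
  let e : Ω → ℕ := fun ω => Nat.card (MulAction.stabilizer G ω.out)
  have hs : ∀ ω : Ω, s ω = (Finset.univ.filter fun p : P => (Quotient.mk'' p : Ω) = ω).card := by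
    intro ω
    rw [show s ω = Nat.card ω.orbit from rfl, Nat.card_coe_set_eq, ← Set.ncard_coe_finset]
    congr 1
    ext p
    simp [MulAction.orbitRel.Quotient.mem_orbit]
  refine arith_orbits (Ω := Ω) s e ?_ ?_ Nat.card_pos ?_
    (hZfin.toFinset.subtype (· ∈ P) |>.image (Quotient.mk'' : P → Ω)) ?_ hd hlt
  · intro ω
    have h := MulAction.index_stabilizer G ω.out
    have h3 := (MulAction.stabilizer G ω.out).card_mul_index
    rw [h] at h3
    rw [← hN] at h3
    rw [mul_comm, ← h3]
    congr 1
    rw [show s ω = Nat.card ω.orbit from rfl, Nat.card_coe_set_eq,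
      MulAction.orbitRel.Quotient.orbit_eq_orbit_out ω Quotient.out_eq']
  · intro ω
    obtain ⟨g, hg, hx⟩ := ω.out.2
    have : Nontrivial (MulAction.stabilizer G ω.out) :=
      ⟨⟨g, Subtype.ext hx⟩, 1, fun h => hg (congrArg Subtype.val h)⟩
    exact Finite.one_lt_card
  · have hB := MulAction.sum_card_fixedBy_eq_card_orbits_mul_card_group G P
    rw [← Nat.card_eq_fintype_card (α := G), ← hN] at hB
    rw [← hB, ← Finset.add_sum_erase _ _ (Finset.mem_univ (1 : G))]
    congr 1
    · have : Fintype.card (MulAction.fixedBy P (1 : G)) = Fintype.card P := by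
        rw [← Nat.card_eq_fintype_card, ← Nat.card_eq_fintype_card]
        exact Nat.card_congr (Equiv.subtypeUnivEquiv fun p => by simp)
      rw [this, ← Finset.card_univ,
        Finset.card_eq_sum_card_fiberwise (f := (Quotient.mk'' : P → Ω)) (t := Finset.univ)
          (fun _ _ => Finset.mem_coe.2 (Finset.mem_univ _))]
      exact Finset.sum_congr rfl fun ω _ => hs ω
    · rw [Finset.sum_congr rfl (g := fun _ => 2), Finset.sum_const,
        Finset.card_erase_of_mem (Finset.mem_univ _), Finset.card_univ,
        ← Nat.card_eq_fintype_card, smul_eq_mul, mul_comm]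
      intro g hg
      have hg1 := Finset.ne_of_mem_erase hg
      rw [← hfix g hg1, ← Nat.card_eq_fintype_card, ← Nat.card_coe_set_eq]
      refine Nat.card_congr ⟨fun p => ⟨p.1.1, congrArg Subtype.val p.2⟩,
        fun x => ⟨⟨x.1, g, hg1, x.2⟩, Subtype.ext x.2⟩, fun _ => rfl, fun _ => rfl⟩
  · rw [← hZd, Set.ncard_eq_toFinset_card _ hZfin]
    have h1 : (hZfin.toFinset.subtype (· ∈ P)).card = hZfin.toFinset.card := by
      rw [Finset.card_subtype, Finset.filter_true_of_mem]
      intro x hx; exact hZP (by simpa using hx)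
    rw [← h1, Finset.card_eq_sum_card_image (Quotient.mk'' : P → Ω)]
    refine Finset.sum_congr rfl fun ω hω => ?_
    rw [hs]
    congr 1
    obtain ⟨q, hq, rfl⟩ := Finset.mem_image.1 hω
    ext p
    simp only [Finset.mem_filter, Finset.mem_univ, true_and, Finset.mem_subtype,
      Set.Finite.mem_toFinset] at hq ⊢
    refine ⟨fun h => ⟨?_, h⟩, fun h => h.2⟩
    obtain ⟨g, hg⟩ := MulAction.orbitRel_apply.1 (Quotient.exact' h)
    have := hZ g _ hq
    rw [← hg]; exact this

/-! ### Lines on the surface -/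

theorem exists_comb {a u : V2} (ha : a ≠ 0) (hu : u ∉ Submodule.span ℂ {a}) (v : V2) :
    ∃ s r : ℂ, v = s • a + r • u := by
  have hli : LinearIndependent ℂ ![a, u] := by
    rw [LinearIndependent.pair_iff' ha]
    intro c hc
    exact hu (hc ▸ Submodule.smul_mem _ _ (Submodule.mem_span_singleton_self a))
  have htop := hli.span_eq_top_of_card_eq_finrank (by simp)
  have hv : v ∈ Submodule.span ℂ (Set.range ![a, u]) := htop ▸ Submodule.mem_top
  simp only [Matrix.range_cons, Matrix.range_empty, Set.union_empty, Set.singleton_union] at hv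
  obtain ⟨s, r, h⟩ := Submodule.mem_span_pair.1 hv
  exact ⟨s, r, h.symm⟩

theorem exists_eval_ne_zero {φ : MvPolynomial (Fin 2) ℂ} (hfin : (zeroPts φ).Finite) :
    ∃ v : V2, eval v φ ≠ 0 := by
  by_contra! h
  have : zeroPts φ = Set.univ := Set.eq_univ_of_forall fun p => h _
  rw [this] at hfin
  exact (Set.infinite_range_of_injective pt_injective) (hfin.subset (Set.subset_univ _))

/-- If `φ(sa + ru) = c r ^ d` identically, then `u` is a multiple of `a`: otherwise `φ` would
vanish identically or have `[a]` as its only zero. -/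
theorem mem_span_of_eval {φ : MvPolynomial (Fin 2) ℂ} {d : ℕ} (hd : 2 ≤ d)
    (hZ : (zeroPts φ).ncard = d) {a u : V2} (ha : a ≠ 0)
    (c : ℂ) (h : ∀ s r : ℂ, eval (s • a + r • u) φ = r ^ d * c) :
    u ∈ Submodule.span ℂ {a} := by
  have hfin : (zeroPts φ).Finite := Set.finite_of_ncard_ne_zero (by omega)
  by_contra hu
  by_cases hc : c = 0
  · obtain ⟨v, hv⟩ := exists_eval_ne_zero hfin
    obtain ⟨s, r, rfl⟩ := exists_comb ha hu v
    exact hv (by rw [h, hc, mul_zero])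
  · have hsub : zeroPts φ ⊆ {Projectivization.mk ℂ a ha} := by
      intro p hp
      obtain ⟨s, r, hsr⟩ := exists_comb ha hu p.rep
      have hp0 : eval p.rep φ = 0 := hp
      rw [hsr, h] at hp0
      have hr : r = 0 := by
        rcases mul_eq_zero.1 hp0 with h0 | h0
        · exact pow_eq_zero_iff (by omega) |>.1 h0
        · exact absurd h0 hc
      rw [Set.mem_singleton_iff, ← p.mk_rep]
      exact (Projectivization.mk_eq_mk_iff' ..).2 ⟨s, by rw [hsr, hr]; simp⟩
    have := Set.ncard_le_ncard hsub
    rw [hZ, Set.ncard_singleton] at this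
    omega

theorem finrank_prod_submodule (p q : ℙ ℂ V2) :
    Module.finrank ℂ (p.submodule.prod q.submodule) = 2 := by
  have : p.submodule.prod q.submodule =
      LinearMap.range (p.submodule.subtype.prodMap q.submodule.subtype) := by
    rw [LinearMap.range_prodMap, Submodule.range_subtype, Submodule.range_subtype]
  rw [this, LinearMap.finrank_range_of_inj, Module.finrank_prod, p.finrank_submodule,
    q.finrank_submodule]
  exact Function.Injective.prodMap (Submodule.subtype_injective _)
    (Submodule.subtype_injective _)

theorem finrank_graph (g : V2 →ₗ[ℂ] V2) : Module.finrank ℂ g.graph = 2 := by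
  rw [LinearMap.graph_eq_range_prod, LinearMap.finrank_range_of_inj]
  · simp
  · intro a b h; exact congrArg Prod.fst h

/-- The linear isomorphisms of `ℂ²` carrying the form `φ` to the form `ψ`. -/
def Isos (φ ψ : MvPolynomial (Fin 2) ℂ) : Type :=
  {g : V2 ≃ₗ[ℂ] V2 // ∀ v, eval (g v) ψ = eval v φ}

/-- A line on `φ(x,y) = ψ(z,t)` either joins a zero of `φ` on `{z = t = 0}` to a zero of `ψ` on
`{x = y = 0}`, or is the graph of an isomorphism between the two forms. -/
theorem classify {φ ψ : MvPolynomial (Fin 2) ℂ} {d : ℕ} (hd : 2 ≤ d)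
    (hφ : φ.IsHomogeneous d) (hψ : ψ.IsHomogeneous d)
    (hZφ : (zeroPts φ).ncard = d) (hZψ : (zeroPts ψ).ncard = d)
    (W : Submodule ℂ (V2 × V2)) (hW : Module.finrank ℂ W = 2)
    (h : ∀ p ∈ W, eval p.1 φ = eval p.2 ψ) :
    (∃ p ∈ zeroPts φ, ∃ q ∈ zeroPts ψ, W = p.submodule.prod q.submodule) ∨
      ∃ g : Isos φ ψ, W = (g.1 : V2 →ₗ[ℂ] V2).graph := by
  have hz : ∀ {χ : MvPolynomial (Fin 2) ℂ}, χ.IsHomogeneous d → eval (0 : V2) χ = 0 := by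
    intro χ hχ
    have := eval_smul_form hχ 0 0
    rwa [zero_smul, zero_pow (by omega), zero_mul] at this
  -- lines meeting `{z = t = 0}`, and lines meeting `{x = y = 0}`
  have hL : ∀ a : V2, a ≠ 0 → (a, (0 : V2)) ∈ W → ∀ p ∈ W, p.1 ∈ Submodule.span ℂ {a} := by
    intro a ha haW p hp
    refine mem_span_of_eval hd hZφ ha (eval p.2 ψ) fun s r => ?_
    have := h _ (W.add_mem (W.smul_mem s haW) (W.smul_mem r hp))
    simpa [eval_smul_form hψ] using this
  have hR : ∀ b : V2, b ≠ 0 → ((0 : V2), b) ∈ W → ∀ p ∈ W, p.2 ∈ Submodule.span ℂ {b} := by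
    intro b hb hbW p hp
    refine mem_span_of_eval hd hZψ hb (eval p.1 φ) fun s r => ?_
    have := h _ (W.add_mem (W.smul_mem s hbW) (W.smul_mem r hp))
    simpa [eval_smul_form hφ] using this.symm
  have hnle : ∀ p : V2 × V2, ¬ W ≤ Submodule.span ℂ {p} := by
    intro p hp
    have h1 := Submodule.finrank_mono hp
    have h2 : Module.finrank ℂ (Submodule.span ℂ {p}) ≤ 1 :=
      (finrank_span_le_card ({p} : Set (V2 × V2))).trans (by simp)
    omega
  have hboth : ∀ a b : V2, a ≠ 0 → b ≠ 0 → (a, (0 : V2)) ∈ W → ((0 : V2), b) ∈ W →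
      ∃ p ∈ zeroPts φ, ∃ q ∈ zeroPts ψ, W = p.submodule.prod q.submodule := by
    intro a b ha hb haW hbW
    refine ⟨Projectivization.mk ℂ a ha, ?_, Projectivization.mk ℂ b hb, ?_, ?_⟩
    · rw [mk_mem_zeroPts hφ, h _ haW, hz hψ]
    · rw [mk_mem_zeroPts hψ, ← h _ hbW, hz hφ]
    · refine Submodule.eq_of_le_of_finrank_eq (fun p hp => ?_)
        (by rw [hW, finrank_prod_submodule])
      rw [Submodule.mem_prod, Projectivization.submodule_mk, Projectivization.submodule_mk]
      exact ⟨hL a ha haW p hp, hR b hb hbW p hp⟩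
  by_cases hA : ∃ a : V2, a ≠ 0 ∧ (a, (0 : V2)) ∈ W
  · left
    obtain ⟨a, ha, haW⟩ := hA
    obtain ⟨p, hp, hpa⟩ := SetLike.not_le_iff_exists.1 (hnle (a, 0))
    obtain ⟨c, hc⟩ := Submodule.mem_span_singleton.1 (hL a ha haW p hp)
    have hb : ((0 : V2), p.2) ∈ W := by
      have := W.sub_mem hp (W.smul_mem c haW)
      convert this using 1
      ext1 <;> simp [hc]
    refine hboth a p.2 ha (fun h0 => hpa ?_) haW hb
    exact Submodule.mem_span_singleton.2 ⟨c, by ext1 <;> simp [hc, h0]⟩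
  by_cases hB : ∃ b : V2, b ≠ 0 ∧ ((0 : V2), b) ∈ W
  · left
    obtain ⟨b, hb, hbW⟩ := hB
    obtain ⟨p, hp, hpb⟩ := SetLike.not_le_iff_exists.1 (hnle (0, b))
    obtain ⟨c, hc⟩ := Submodule.mem_span_singleton.1 (hR b hb hbW p hp)
    have ha : (p.1, (0 : V2)) ∈ W := by
      have := W.sub_mem hp (W.smul_mem c hbW)
      convert this using 1
      ext1 <;> simp [hc]
    refine hboth p.1 b (fun h0 => hpb ?_) hb ha hbW
    exact Submodule.mem_span_singleton.2 ⟨c, by ext1 <;> simp [hc, h0]⟩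
  right
  push Not at hA hB
  have hinj1 : Function.Injective ((LinearMap.fst ℂ V2 V2).comp W.subtype) := by
    rw [← LinearMap.ker_eq_bot, LinearMap.ker_eq_bot']
    rintro ⟨⟨a, b⟩, hp⟩ hab
    simp at hab
    subst hab
    by_cases hb : b = 0
    · simp [hb]
    · exact absurd hp (hB b hb)
  have hinj2 : Function.Injective ((LinearMap.snd ℂ V2 V2).comp W.subtype) := by
    rw [← LinearMap.ker_eq_bot, LinearMap.ker_eq_bot']
    rintro ⟨⟨a, b⟩, hp⟩ hab
    simp at hab
    subst hab
    by_cases ha : a = 0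
    · simp [ha]
    · exact absurd hp (hA a ha)
  let e1 := LinearMap.linearEquivOfInjective _ hinj1 (by rw [hW]; simp)
  let e2 := LinearMap.linearEquivOfInjective _ hinj2 (by rw [hW]; simp)
  have he1 : ∀ w : W, e1 w = w.1.1 := fun w => rfl
  have he2 : ∀ w : W, e2 w = w.1.2 := fun w => rfl
  refine ⟨⟨e1.symm.trans e2, fun v => ?_⟩, ?_⟩
  · have := h _ (e1.symm v).2
    rw [← he1, ← he2, LinearEquiv.apply_symm_apply] at this
    exact this.symm
  · refine Submodule.eq_of_le_of_finrank_eq (fun p hp => ?_) (by rw [hW, finrank_graph])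
    rw [LinearMap.mem_graph_iff]
    change p.2 = e2 (e1.symm p.1)
    rw [show p.1 = e1 ⟨p, hp⟩ from rfl, LinearEquiv.symm_apply_apply]
    rfl

theorem submodule_prod_inj {p p' q q' : ℙ ℂ V2}
    (h : p.submodule.prod q.submodule = p'.submodule.prod q'.submodule) : p = p' ∧ q = q' := by
  constructor <;> apply Projectivization.submodule_injective <;> ext v
  · have := SetLike.ext_iff.1 h (v, 0)
    simpa [Submodule.mem_prod] using this
  · have := SetLike.ext_iff.1 h (0, v)
    simpa [Submodule.mem_prod] using this

/-- The lines on the surface are the `d²` lines joining zeros and the graphs of isomorphisms. -/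
theorem card_lines {φ ψ : MvPolynomial (Fin 2) ℂ} {d : ℕ} (hd : 2 ≤ d)
    (hφ : φ.IsHomogeneous d) (hψ : ψ.IsHomogeneous d)
    (hZφ : (zeroPts φ).ncard = d) (hZψ : (zeroPts ψ).ncard = d) [Finite (Isos φ ψ)] :
    Nat.card {W : Submodule ℂ (Fin 4 → ℂ) // IsLine W ∧ LiesOn (sepForm φ ψ) W} =
      d ^ 2 + Nat.card (Isos φ ψ) := by
  have hfinφ : Finite (zeroPts φ) := Set.finite_of_ncard_ne_zero (by omega)
  have hfinψ : Finite (zeroPts ψ) := Set.finite_of_ncard_ne_zero (by omega)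
  have hz : ∀ {χ : MvPolynomial (Fin 2) ℂ} {p : ℙ ℂ V2}, χ.IsHomogeneous d → p ∈ zeroPts χ →
      ∀ v ∈ p.submodule, eval v χ = 0 := by
    intro χ p hχ hp v hv
    rw [Projectivization.submodule_eq] at hv
    obtain ⟨c, rfl⟩ := Submodule.mem_span_singleton.1 hv
    rw [eval_smul_form hχ, show eval p.rep χ = 0 from hp, mul_zero]
  let Ln := {W : Submodule ℂ (V2 × V2) // Module.finrank ℂ W = 2 ∧
    ∀ p ∈ W, eval p.1 φ = eval p.2 ψ}
  have hcard : Nat.card {W : Submodule ℂ (Fin 4 → ℂ) // IsLine W ∧ LiesOn (sepForm φ ψ) W} =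
      Nat.card Ln := by
    refine Nat.card_congr
      ((Submodule.orderIsoMapComap splitEquiv).toEquiv.subtypeEquiv fun W => ?_)
    change IsLine W ∧ _ ↔ Module.finrank ℂ (W.map (splitEquiv : (Fin 4 → ℂ) →ₗ[ℂ] V2 × V2)) = 2
      ∧ ∀ p ∈ W.map (splitEquiv : (Fin 4 → ℂ) →ₗ[ℂ] V2 × V2), _
    refine and_congr ?_ ?_
    · rw [IsLine, LinearEquiv.finrank_map_eq]
    · simp only [LiesOn, eval_sepForm, sub_eq_zero]
      refine ⟨?_, fun h v hv => h _ (Submodule.mem_map_of_mem hv)⟩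
      rintro h _ ⟨v, hv, rfl⟩
      exact h v hv
  let F : (zeroPts φ × zeroPts ψ) ⊕ Isos φ ψ → Ln := Sum.elim
    (fun pq => ⟨pq.1.1.submodule.prod pq.2.1.submodule, finrank_prod_submodule _ _,
      fun v hv => by rw [hz hφ pq.1.2 _ hv.1, hz hψ pq.2.2 _ hv.2]⟩)
    (fun g => ⟨(g.1 : V2 →ₗ[ℂ] V2).graph, finrank_graph _, fun v hv => by
      rw [(LinearMap.mem_graph_iff _ _).1 hv]; exact (g.2 _).symm⟩)
  have hne : ∀ (p q : ℙ ℂ V2) (g : V2 ≃ₗ[ℂ] V2),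
      p.submodule.prod q.submodule ≠ (g : V2 →ₗ[ℂ] V2).graph := by
    intro p q g h
    have : (p.rep, (0 : V2)) ∈ (g : V2 →ₗ[ℂ] V2).graph := by
      rw [← h]
      exact ⟨by rw [Projectivization.submodule_eq]; exact Submodule.mem_span_singleton_self _,
        Submodule.zero_mem _⟩
    have h0 := (LinearMap.mem_graph_iff _ _).1 this
    exact p.rep_nonzero (g.map_eq_zero_iff.1 h0.symm)
  have hF : Function.Bijective F := by
    constructor
    · rintro (⟨p, q⟩ | g) (⟨p', q'⟩ | g') h
      · have := submodule_prod_inj (congrArg Subtype.val h)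
        exact congrArg Sum.inl (Prod.ext (Subtype.ext this.1) (Subtype.ext this.2))
      · exact absurd (congrArg Subtype.val h) (hne _ _ _)
      · exact absurd (congrArg Subtype.val h).symm (hne _ _ _)
      · have h1 : (g.1 : V2 →ₗ[ℂ] V2).graph = (g'.1 : V2 →ₗ[ℂ] V2).graph :=
          congrArg Subtype.val h
        congr 1
        apply Subtype.ext
        ext1 v
        have h2 : (v, g.1 v) ∈ (g.1 : V2 →ₗ[ℂ] V2).graph := by
          rw [LinearMap.mem_graph_iff]; rfl
        rw [h1, LinearMap.mem_graph_iff] at h2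
        exact h2
    · rintro ⟨W, hW, h⟩
      rcases classify hd hφ hψ hZφ hZψ W hW h with ⟨p, hp, q, hq, rfl⟩ | ⟨g, rfl⟩
      · exact ⟨Sum.inl (⟨p, hp⟩, ⟨q, hq⟩), rfl⟩
      · exact ⟨Sum.inr g, rfl⟩
  rw [hcard, ← Nat.card_congr (Equiv.ofBijective F hF), Nat.card_sum, Nat.card_prod,
    Nat.card_coe_set_eq, Nat.card_coe_set_eq, hZφ, hZψ, sq]

/-! ### Symmetries of a binary form -/

open Projectivization in
theorem smul_mk_eq_iff (g : V2 ≃ₗ[ℂ] V2) {v : V2} (hv : v ≠ 0) :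
    g • mk ℂ v hv = mk ℂ v hv ↔ ∃ c : ℂ, g v = c • v := by
  rw [smul_mk, mk_eq_mk_iff']
  exact ⟨fun ⟨c, hc⟩ => ⟨c, hc.symm⟩, fun ⟨c, hc⟩ => ⟨c, hc.symm⟩⟩

theorem smul_eq_self_of_scalar {g : V2 ≃ₗ[ℂ] V2} {c : ℂ} (h : ∀ v, g v = c • v) (p : ℙ ℂ V2) :
    g • p = p := by
  induction p using Projectivization.ind with
  | h v hv => exact (smul_mk_eq_iff g hv).2 ⟨c, h v⟩

theorem ne_of_mem_span {a b : V2} (ha : a ≠ 0) (hb : b ≠ 0) :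
    Projectivization.mk ℂ a ha ≠ Projectivization.mk ℂ b hb ↔ b ∉ Submodule.span ℂ {a} := by
  rw [ne_comm, Ne, Projectivization.mk_eq_mk_iff', Submodule.mem_span_singleton]

/-- An automorphism with two distinct eigenvalues has exactly two fixed points. -/
theorem fixed_of_eigen {g : V2 ≃ₗ[ℂ] V2} {a b : V2} (ha : a ≠ 0) (hb : b ≠ 0) {α β : ℂ}
    (hga : g a = α • a) (hgb : g b = β • b) (hab : b ∉ Submodule.span ℂ {a}) (hαβ : α ≠ β)
    (p : ℙ ℂ V2) :
    g • p = p ↔ p = Projectivization.mk ℂ a ha ∨ p = Projectivization.mk ℂ b hb := by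
  constructor
  · induction p using Projectivization.ind with
    | h v hv =>
      intro h
      obtain ⟨c, hc⟩ := (smul_mk_eq_iff g hv).1 h
      obtain ⟨s, r, rfl⟩ := exists_comb ha hab v
      rw [map_add, map_smul, map_smul, hga, hgb] at hc
      have h1 : (r * (β - c)) • b = (s * (c - α)) • a := by
        linear_combination (norm := module) hc
      have h2 : r * (β - c) = 0 := by
        by_contra h0
        refine hab (Submodule.mem_span_singleton.2 ⟨(r * (β - c))⁻¹ * (s * (c - α)), ?_⟩)
        rw [mul_smul, ← h1, smul_smul, inv_mul_cancel₀ h0, one_smul]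
      have h3 : s * (c - α) = 0 := by
        rw [h2, zero_smul] at h1
        exact (smul_eq_zero.1 h1.symm).resolve_right ha
      rcases mul_eq_zero.1 h2 with rfl | hβ
      · left
        exact (Projectivization.mk_eq_mk_iff' ..).2 ⟨s, by simp⟩
      · rcases mul_eq_zero.1 h3 with rfl | hα
        · right
          exact (Projectivization.mk_eq_mk_iff' ..).2 ⟨r, by simp⟩
        · exact absurd (by linear_combination -hα - hβ) hαβ
  · rintro (rfl | rfl)
    · exact (smul_mk_eq_iff g ha).2 ⟨α, hga⟩
    · exact (smul_mk_eq_iff g hb).2 ⟨β, hgb⟩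

/-- An automorphism fixing three points of the projective line is a scalar. -/
theorem scalar_of_fixed {g : V2 ≃ₗ[ℂ] V2} {S : Set (ℙ ℂ V2)} (hS : 3 ≤ S.ncard)
    (h : ∀ p ∈ S, g • p = p) : ∃ c : ℂ, ∀ v, g v = c • v := by
  have hfin : S.Finite := Set.finite_of_ncard_ne_zero (by omega)
  obtain ⟨p, hp, q, hq, hpq⟩ := (Set.one_lt_ncard hfin).1 (by omega : 1 < S.ncard)
  induction p using Projectivization.ind with
  | h a ha =>
    induction q using Projectivization.ind with
    | h b hb =>
      obtain ⟨α, hα⟩ := (smul_mk_eq_iff g ha).1 (h _ hp)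
      obtain ⟨β, hβ⟩ := (smul_mk_eq_iff g hb).1 (h _ hq)
      have hab := (ne_of_mem_span ha hb).1 hpq
      by_cases hαβ : α = β
      · refine ⟨α, fun v => ?_⟩
        obtain ⟨s, r, rfl⟩ := exists_comb ha hab v
        rw [map_add, map_smul, map_smul, hα, hβ, ← hαβ]
        module
      · have hsub : S ⊆ {Projectivization.mk ℂ a ha, Projectivization.mk ℂ b hb} :=
          fun p hp => (fixed_of_eigen ha hb hα hβ hab hαβ p).1 (h p hp)
        have := Set.ncard_le_ncard hsub
        rw [Set.ncard_pair hpq] at this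
        omega

/-- An automorphism of finite order which is not a scalar is diagonalisable with distinct
eigenvalues, so it has exactly two fixed points. -/
theorem ncard_fixed {g : V2 ≃ₗ[ℂ] V2} {n : ℕ} (hn : 0 < n) (hg : g ^ n = 1)
    (hns : ¬ ∃ c : ℂ, ∀ v, g v = c • v) : {p : ℙ ℂ V2 | g • p = p}.ncard = 2 := by
  obtain ⟨α, hα⟩ := Module.End.exists_eigenvalue (g : V2 →ₗ[ℂ] V2)
  obtain ⟨a, ha⟩ := hα.exists_hasEigenvector
  have ha0 := ha.2
  have hga : g a = α • a := ha.apply_eq_smul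
  obtain ⟨u, hu⟩ : ∃ u, u ∉ Submodule.span ℂ {a} := by
    by_contra! h
    have h1 : Module.finrank ℂ (Submodule.span ℂ {a}) ≤ 1 :=
      (finrank_span_le_card ({a} : Set V2)).trans (by simp)
    have htop : Submodule.span ℂ {a} = ⊤ := eq_top_iff.2 fun x _ => h x
    rw [htop, finrank_top] at h1
    simp at h1
  obtain ⟨c, μ, hgu⟩ := exists_comb ha0 hu (g u)
  have hα0 : α ≠ 0 := by
    rintro rfl
    rw [zero_smul] at hga
    exact ha0 (g.map_eq_zero_iff.1 hga)
  have hμ : α ≠ μ := by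
    rintro rfl
    -- a Jordan block has infinite order
    have hpow : ∀ k : ℕ, (g ^ (k + 1)) u = ((k + 1) * α ^ k * c) • a + α ^ (k + 1) • u := by
      intro k
      induction k with
      | zero => simp [hgu]
      | succ k ih =>
        rw [pow_succ', LinearEquiv.mul_apply, ih, map_add, map_smul, map_smul, hga, hgu]
        push_cast
        module
    have h1 := hpow (n - 1)
    rw [show n - 1 + 1 = n by omega, hg, LinearEquiv.coe_one, id] at h1
    have h2 : (((n - 1 : ℕ) + 1 : ℂ) * α ^ (n - 1) * c) • a = (1 - α ^ n) • u := by
      linear_combination (norm := module) -h1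
    have h3 : 1 - α ^ n = 0 := by
      by_contra h0
      refine hu (Submodule.mem_span_singleton.2 ⟨(1 - α ^ n)⁻¹ *
        (((n - 1 : ℕ) + 1 : ℂ) * α ^ (n - 1) * c), ?_⟩)
      rw [mul_smul, h2, smul_smul, inv_mul_cancel₀ h0, one_smul]
    rw [h3, zero_smul] at h2
    have h4 := (smul_eq_zero.1 h2).resolve_right ha0
    have h5 : ((n - 1 : ℕ) + 1 : ℂ) ≠ 0 := Nat.cast_add_one_ne_zero (n - 1)
    have hc : c = 0 := by simpa [h5, hα0] using h4
    refine hns ⟨α, fun v => ?_⟩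
    obtain ⟨s, r, rfl⟩ := exists_comb ha0 hu v
    rw [map_add, map_smul, map_smul, hga, hgu, hc]
    module
  have hαμ : α - μ ≠ 0 := sub_ne_zero.2 hμ
  set b := u + (c / (μ - α)) • a with hb
  have hμα : μ - α ≠ 0 := sub_ne_zero.2 hμ.symm
  have hbs : b ∉ Submodule.span ℂ {a} := fun h => hu (by
    have := Submodule.sub_mem _ h (Submodule.smul_mem _ (c / (μ - α))
      (Submodule.mem_span_singleton_self a))
    simpa [hb] using this)
  have hb0 : b ≠ 0 := fun h => hbs (h ▸ Submodule.zero_mem _)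
  have hgb : g b = μ • b := by
    rw [hb, map_add, map_smul, hga, hgu]
    have : c + c / (μ - α) * α = μ * (c / (μ - α)) := by field_simp; ring
    rw [smul_add, smul_smul, smul_smul, ← this]
    module
  have : {p : ℙ ℂ V2 | g • p = p} =
      {Projectivization.mk ℂ a ha0, Projectivization.mk ℂ b hb0} :=
    Set.ext fun p => fixed_of_eigen ha0 hb0 hga hgb hbs hμ p
  rw [this, Set.ncard_pair ((ne_of_mem_span ha0 hb0).2 hbs)]

/-- The group of linear automorphisms of `ℂ²` preserving the binary form `φ`. -/
noncomputable def formStab (φ : MvPolynomial (Fin 2) ℂ) : Subgroup (V2 ≃ₗ[ℂ] V2) where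
  carrier := {g | ∀ v, eval (g v) φ = eval v φ}
  one_mem' _ := rfl
  mul_mem' hg hh v := by rw [LinearEquiv.mul_apply, hg, hh]
  inv_mem' {g} hg v := by
    rw [← hg, ← LinearEquiv.mul_apply, mul_inv_cancel]; rfl

/-- The action of `formStab φ` on the projective line. -/
noncomputable def projHom (φ : MvPolynomial (Fin 2) ℂ) : formStab φ →* Equiv.Perm (ℙ ℂ V2) :=
  MulAction.toPermHom (formStab φ) (ℙ ℂ V2)

/-- The group of projective symmetries of the binary form `φ`, as permutations of the
projective line. -/
noncomputable def projSym (φ : MvPolynomial (Fin 2) ℂ) : Subgroup (Equiv.Perm (ℙ ℂ V2)) :=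
  (projHom φ).range

theorem projHom_apply {φ : MvPolynomial (Fin 2) ℂ} (h : formStab φ) (p : ℙ ℂ V2) :
    projHom φ h p = h.1 • p := rfl

theorem smul_mem_zeroPts {φ : MvPolynomial (Fin 2) ℂ} {d : ℕ} (hφ : φ.IsHomogeneous d)
    (g : projSym φ) {p : ℙ ℂ V2} (hp : p ∈ zeroPts φ) : g • p ∈ zeroPts φ := by
  obtain ⟨_, ⟨h, rfl⟩⟩ := g
  change h.1 • p ∈ zeroPts φ
  induction p using Projectivization.ind with
  | h v hv =>
    rw [Projectivization.smul_mk, mk_mem_zeroPts hφ]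
    rw [mk_mem_zeroPts hφ] at hp
    rw [← hp]; exact h.2 v

theorem finite_projSym {φ : MvPolynomial (Fin 2) ℂ} {d : ℕ} (hd : 3 ≤ d)
    (hφ : φ.IsHomogeneous d) (hZ : (zeroPts φ).ncard = d) : Finite (projSym φ) := by
  have hfin : Finite (zeroPts φ) := Set.finite_of_ncard_ne_zero (by omega)
  refine Finite.of_injective
    (fun g : projSym φ => fun p : zeroPts φ =>
      (⟨g • p.1, smul_mem_zeroPts hφ g p.2⟩ : zeroPts φ)) fun g g' hgg => ?_
  have h1 : ∀ p ∈ zeroPts φ, (g'⁻¹ * g) • p = p := fun p hp => by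
    have := congrArg Subtype.val (congrFun hgg ⟨p, hp⟩)
    rw [mul_smul, inv_smul_eq_iff]; exact this
  rw [← inv_mul_eq_one]
  suffices ∀ γ : projSym φ, (∀ p ∈ zeroPts φ, γ • p = p) → γ = 1 by
    rw [← inv_inj, mul_inv_rev, inv_inv, inv_one]; exact this _ h1
  rintro ⟨_, ⟨h, rfl⟩⟩ hγ
  obtain ⟨c, hc⟩ := scalar_of_fixed (g := h.1) (by omega : 3 ≤ (zeroPts φ).ncard) hγ
  exact Subtype.ext (Equiv.ext fun p => smul_eq_self_of_scalar hc p)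

/-- The kernel of the action on the projective line consists of the scalars which are `d`-th
roots of unity. -/
theorem card_formStab {φ : MvPolynomial (Fin 2) ℂ} {d : ℕ} (hd : 3 ≤ d)
    (hφ : φ.IsHomogeneous d) (hZ : (zeroPts φ).ncard = d) :
    Nat.card (formStab φ) = d * Nat.card (projSym φ) := by
  have hfin : (zeroPts φ).Finite := Set.finite_of_ncard_ne_zero (by omega)
  obtain ⟨w, hw⟩ := exists_eval_ne_zero hfin
  have : NeZero d := ⟨by omega⟩
  rw [← (projHom φ).ker.card_mul_index, Subgroup.index_ker, projSym]
  congr 1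
  rw [← Complex.card_rootsOfUnity d]
  symm
  let sc : ℂˣ → (V2 ≃ₗ[ℂ] V2) := fun c => LinearEquiv.smulOfUnit c
  have hsc : ∀ c v, sc c v = (c : ℂ) • v := fun c v => rfl
  let F : rootsOfUnity d ℂ → (projHom φ).ker := fun c =>
    ⟨⟨sc c.1, fun v => by
      have h1 : ((c.1 : ℂˣ) : ℂ) ^ d = 1 := by
        have := (mem_rootsOfUnity d c.1).1 c.2
        rw [← Units.val_pow_eq_pow_val, this, Units.val_one]
      rw [hsc, eval_smul_form hφ, h1, one_mul]⟩,
      Equiv.ext fun p => smul_eq_self_of_scalar (hsc c.1) p⟩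
  refine Nat.card_congr (Equiv.ofBijective F ⟨fun c c' h => ?_, ?_⟩)
  · have h1 : sc c.1 = sc c'.1 := congrArg (fun x : (projHom φ).ker => x.1.1) h
    have h2 : ((c.1 : ℂˣ) : ℂ) • (![1, 0] : V2) = ((c'.1 : ℂˣ) : ℂ) • (![1, 0] : V2) := by
      rw [← hsc, ← hsc, h1]
    exact Subtype.ext (Units.ext (smul_left_injective _ inf_ne h2))
  · rintro ⟨h, hh⟩
    have hh' : ∀ p : ℙ ℂ V2, h.1 • p = p := fun p =>
      congrArg (fun e : Equiv.Perm (ℙ ℂ V2) => e p) hh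
    obtain ⟨c, hc⟩ := scalar_of_fixed (g := h.1) (by omega : 3 ≤ (zeroPts φ).ncard)
      fun p _ => hh' p
    have hcd : c ^ d = 1 := by
      have := h.2 w
      rw [hc, eval_smul_form hφ] at this
      exact mul_right_cancel₀ hw (by rw [this, one_mul])
    refine ⟨rootsOfUnity.mkOfPowEq c hcd, ?_⟩
    refine Subtype.ext (Subtype.ext (LinearEquiv.ext fun v => ?_))
    rw [hc]
    change sc _ v = _
    rw [hsc, rootsOfUnity.coe_mkOfPowEq]

/-- The orbit count applied to the symmetries of a binary form. -/
theorem card_projSym {φ : MvPolynomial (Fin 2) ℂ} {d : ℕ} (hd : 3 ≤ d)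
    (hφ : φ.IsHomogeneous d) (hZ : (zeroPts φ).ncard = d) :
    Nat.card (projSym φ) ≤ 2 * d ∨ (d = 4 ∧ Nat.card (projSym φ) = 12) ∨
      (d = 6 ∧ Nat.card (projSym φ) = 24) ∨ (d = 8 ∧ Nat.card (projSym φ) = 24) ∨
      (d = 12 ∧ Nat.card (projSym φ) = 60) ∨ (d = 20 ∧ Nat.card (projSym φ) = 60) := by
  have := finite_projSym hd hφ hZ
  have : Finite (formStab φ) := Nat.finite_of_card_ne_zero (by
    rw [card_formStab hd hφ hZ]
    exact Nat.mul_ne_zero (by omega) Nat.card_pos.ne')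
  refine card_le_of_fixedBy (X := ℙ ℂ V2) ?_ (zeroPts φ)
    (fun g p hp => smul_mem_zeroPts hφ g hp) hZ hd
  rintro ⟨_, ⟨h, rfl⟩⟩ hg
  have hord : h.1 ^ orderOf h = 1 := by
    rw [← Subgroup.coe_pow, pow_orderOf_eq_one, Subgroup.coe_one]
  refine ncard_fixed (orderOf_pos h) hord ?_
  rintro ⟨c, hc⟩
  exact hg (Subtype.ext (Equiv.ext fun p => smul_eq_self_of_scalar hc p))

/-- The isomorphisms from `φ` to `ψ`, if there are any, form a coset of the stabiliser of `φ`. -/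
theorem card_isos {φ ψ : MvPolynomial (Fin 2) ℂ} :
    IsEmpty (Isos φ ψ) ∨ Nonempty (Isos φ ψ ≃ formStab φ) := by
  rcases isEmpty_or_nonempty (Isos φ ψ) with h | ⟨⟨g, hg⟩⟩
  · exact Or.inl h
  · refine Or.inr ⟨⟨fun k => ⟨g⁻¹ * k.1, fun v => ?_⟩, fun h => ⟨g * h.1, fun v => ?_⟩, ?_, ?_⟩⟩
    · rw [← hg, ← LinearEquiv.mul_apply, mul_inv_cancel_left, k.2]
    · rw [LinearEquiv.mul_apply, hg, h.2]
    · intro k; exact Subtype.ext (mul_inv_cancel_left _ _)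
    · intro k; exact Subtype.ext (inv_mul_cancel_left _ _)

theorem card_lines_le {φ ψ : MvPolynomial (Fin 2) ℂ} {d : ℕ} (hd : 3 ≤ d)
    (hφ : φ.IsHomogeneous d) (hψ : ψ.IsHomogeneous d)
    (hs : SmoothSurface (sepForm φ ψ)) :
    Nat.card {W : Submodule ℂ (Fin 4 → ℂ) // IsLine W ∧ LiesOn (sepForm φ ψ) W} ≤
      d ^ 2 + d * Nat.card (projSym φ) := by
  obtain ⟨h1, h2⟩ := (smooth_iff (by omega) hφ hψ).1 hs
  have hZφ := ncard_zeroPts (by omega) hφ h1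
  have hZψ := ncard_zeroPts (by omega) hψ h2
  have := finite_projSym hd hφ hZφ
  have : Finite (formStab φ) := Nat.finite_of_card_ne_zero (by
    rw [card_formStab hd hφ hZφ]
    exact Nat.mul_ne_zero (by omega) Nat.card_pos.ne')
  rcases card_isos (φ := φ) (ψ := ψ) with h | ⟨⟨e⟩⟩
  · rw [card_lines (by omega) hφ hψ hZφ hZψ, Nat.card_of_isEmpty]; omega
  · have := Finite.of_equiv _ e.symm
    rw [card_lines (by omega) hφ hψ hZφ hZψ, Nat.card_congr e, card_formStab hd hφ hZφ]

theorem card_lines_self {φ : MvPolynomial (Fin 2) ℂ} {d : ℕ} (hd : 3 ≤ d)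
    (hφ : φ.IsHomogeneous d) (hs : Nonsing φ) :
    Nat.card {W : Submodule ℂ (Fin 4 → ℂ) // IsLine W ∧ LiesOn (sepForm φ φ) W} =
      d ^ 2 + d * Nat.card (projSym φ) := by
  have hZφ := ncard_zeroPts (by omega) hφ hs
  have := finite_projSym hd hφ hZφ
  have : Finite (formStab φ) := Nat.finite_of_card_ne_zero (by
    rw [card_formStab hd hφ hZφ]
    exact Nat.mul_ne_zero (by omega) Nat.card_pos.ne')
  have : Finite (Isos φ φ) := this
  rw [card_lines (by omega) hφ hφ hZφ hZφ, ← card_formStab hd hφ hZφ]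
  rfl

/-! ### Lower bounds for the symmetry group -/

/-- The linear automorphism of `ℂ²` with matrix `(a b; c d)`; on affine points it acts as
`z ↦ (a z + b) / (c z + d)`. -/
noncomputable def mobius (a b c d : ℂ) (h : a * d - b * c ≠ 0) : V2 ≃ₗ[ℂ] V2 where
  toFun v := ![a * v 0 + b * v 1, c * v 0 + d * v 1]
  invFun v := ![(a * d - b * c)⁻¹ * (d * v 0 - b * v 1), (a * d - b * c)⁻¹ * (a * v 1 - c * v 0)]
  map_add' v w := by ext i; fin_cases i <;> simp <;> ring
  map_smul' k v := by ext i; fin_cases i <;> simp <;> ring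
  left_inv v := by
    have hh := inv_mul_cancel₀ h
    ext i; fin_cases i <;> simp
    · linear_combination v 0 * hh
    · linear_combination v 1 * hh
  right_inv v := by
    have hh := inv_mul_cancel₀ h
    ext i; fin_cases i <;> simp
    · linear_combination v 0 * hh
    · linear_combination v 1 * hh

theorem mobius_apply (a b c d : ℂ) (h : a * d - b * c ≠ 0) (v : V2) :
    mobius a b c d h v = ![a * v 0 + b * v 1, c * v 0 + d * v 1] := rfl

theorem mobius_smul_pt (a b c d : ℂ) (h : a * d - b * c ≠ 0) {z : ℂ} (hz : c * z + d ≠ 0) :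
    mobius a b c d h • pt z = pt ((a * z + b) / (c * z + d)) := by
  rw [pt, Projectivization.smul_mk, mk_eq_pt _ (by simpa [mobius_apply] using hz)]
  simp [mobius_apply]

theorem mobius_smul_pt_eq_inf (a b c d : ℂ) (h : a * d - b * c ≠ 0) {z : ℂ}
    (hz : c * z + d = 0) : mobius a b c d h • pt z = ptInf := by
  rw [pt, Projectivization.smul_mk, mk_eq_ptInf _ (by simpa [mobius_apply] using hz)]

/-- An automorphism multiplying the form by a constant can be rescaled to preserve it. -/
theorem exists_projSym {φ : MvPolynomial (Fin 2) ℂ} {d : ℕ} (hd : 1 ≤ d)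
    (hφ : φ.IsHomogeneous d) (g : V2 ≃ₗ[ℂ] V2) {c : ℂ} (hc : c ≠ 0)
    (h : ∀ v, eval (g v) φ = c * eval v φ) : ∃ γ : projSym φ, ∀ p : ℙ ℂ V2, γ • p = g • p := by
  obtain ⟨t, ht⟩ := IsAlgClosed.exists_pow_nat_eq c⁻¹ (by omega : 0 < d)
  have ht0 : t ≠ 0 := by
    rintro rfl
    rw [zero_pow (by omega)] at ht
    exact inv_ne_zero hc ht.symm
  let s : V2 ≃ₗ[ℂ] V2 := LinearEquiv.smulOfUnit (Units.mk0 t ht0)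
  have hs : ∀ v, s v = t • v := fun v => rfl
  have hmem : s * g ∈ formStab φ := fun v => by
    rw [LinearEquiv.mul_apply, hs, eval_smul_form hφ, h, ht, inv_mul_cancel_left₀ hc]
  refine ⟨⟨projHom φ ⟨s * g, hmem⟩, ⟨_, rfl⟩⟩, fun p => ?_⟩
  change (s * g) • p = g • p
  rw [mul_smul]
  exact smul_eq_self_of_scalar hs _

/-- The rotation `z ↦ ζ z`, with `ζ` of order `n`, lies in the stabiliser of the point `0`; so
the order of the group is at least `n` times the size of the orbit of `0`. -/
theorem le_card_projSym {φ : MvPolynomial (Fin 2) ℂ} [Finite (projSym φ)] {n : ℕ} {ζ : ℂ}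
    (hζ : IsPrimitiveRoot ζ n) {σ : projSym φ} (hσ : ∀ a, σ • pt a = pt (ζ * a))
    {S : Set (ℙ ℂ V2)} (hS : S ⊆ MulAction.orbit (projSym φ) (pt 0)) :
    n * S.ncard ≤ Nat.card (projSym φ) := by
  have hpow : ∀ (k : ℕ) (a : ℂ), σ ^ k • pt a = pt (ζ ^ k * a) := by
    intro k a
    induction k with
    | zero => simp
    | succ k ih => rw [pow_succ', mul_smul, ih, hσ, pow_succ', mul_assoc]
  have hle : Subgroup.zpowers σ ≤ MulAction.stabilizer (projSym φ) (pt 0) := by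
    rw [Subgroup.zpowers_le, MulAction.mem_stabilizer_iff, hσ, mul_zero]
  have hn : n ≤ orderOf σ := by
    refine Nat.le_of_dvd (orderOf_pos σ) (hζ.dvd_of_pow_eq_one _ ?_)
    have := hpow (orderOf σ) 1
    rw [pow_orderOf_eq_one, one_smul, mul_one] at this
    exact (pt_injective this).symm
  rw [← (MulAction.stabilizer (projSym φ) (pt 0)).card_mul_index, MulAction.index_stabilizer]
  refine Nat.mul_le_mul (hn.trans ?_) (Set.ncard_le_ncard hS ?_)
  · rw [← Nat.card_zpowers]
    exact Subgroup.card_le_of_le hle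
  · exact Set.finite_range _

/-- The rotates `ζ ^ j a` of `a`, for `j < n`, as points of the affine line. -/
noncomputable def rotates (ζ : ℂ) (n : ℕ) (a : ℂ) : Finset ℂ :=
  (Finset.range n).image fun j => ζ ^ j * a

theorem card_rotates {ζ : ℂ} {n : ℕ} (hζ : IsPrimitiveRoot ζ n) {a : ℂ} (ha : a ≠ 0) :
    (rotates ζ n a).card = n := by
  rw [rotates, Finset.card_image_of_injOn, Finset.card_range]
  intro i hi j hj h
  exact hζ.pow_inj (by simpa using hi) (by simpa using hj) (mul_right_cancel₀ ha h)

theorem pow_of_mem_rotates {ζ : ℂ} {n : ℕ} (hζ : IsPrimitiveRoot ζ n) {a z : ℂ}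
    (hz : z ∈ rotates ζ n a) : z ^ n = a ^ n := by
  obtain ⟨j, -, rfl⟩ := Finset.mem_image.1 hz
  rw [mul_pow, ← pow_mul, mul_comm j, pow_mul, hζ.pow_eq_one, one_pow, one_mul]

theorem pt_rotates_mem {φ : MvPolynomial (Fin 2) ℂ} {n : ℕ} {ζ : ℂ} {σ : projSym φ}
    (hσ : ∀ a, σ • pt a = pt (ζ * a)) {a : ℂ}
    (ha : pt a ∈ MulAction.orbit (projSym φ) (pt 0)) {z : ℂ} (hz : z ∈ rotates ζ n a) :
    pt z ∈ MulAction.orbit (projSym φ) (pt 0) := by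
  obtain ⟨j, -, rfl⟩ := Finset.mem_image.1 hz
  clear hz
  induction j with
  | zero => simpa using ha
  | succ j ih =>
    rw [pow_succ', mul_assoc, ← hσ]
    exact MulAction.mem_orbit_of_mem_orbit σ ih

/-- The orbit contains `0` and the `n` rotates of `a`. -/
theorem le_card_of_one {φ : MvPolynomial (Fin 2) ℂ} [Finite (projSym φ)] {n : ℕ} {ζ : ℂ}
    (hn : 1 ≤ n) (hζ : IsPrimitiveRoot ζ n) {σ : projSym φ} (hσ : ∀ a, σ • pt a = pt (ζ * a))
    {a : ℂ} (ha : a ≠ 0) (h : pt a ∈ MulAction.orbit (projSym φ) (pt 0)) :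
    n * (n + 1) ≤ Nat.card (projSym φ) := by
  have h0 : (0 : ℂ) ∉ rotates ζ n a := fun h => pow_ne_zero n ha (by
    rw [← pow_of_mem_rotates hζ h, zero_pow (by omega)])
  have := le_card_projSym hζ hσ (S := pt '' (insert 0 (rotates ζ n a) : Finset ℂ)) (by
    rintro _ ⟨z, hz, rfl⟩
    rcases Finset.mem_insert.1 hz with rfl | hz
    · exact MulAction.mem_orbit_self _
    · exact pt_rotates_mem hσ h hz)
  rwa [Set.ncard_image_of_injective _ pt_injective, Set.ncard_coe_finset,
    Finset.card_insert_of_notMem h0, card_rotates hζ ha] at this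

/-- The orbit contains `0`, the `n` rotates of `a` and the `n` rotates of `b`. -/
theorem le_card_of_two {φ : MvPolynomial (Fin 2) ℂ} [Finite (projSym φ)] {n : ℕ} {ζ : ℂ}
    (hn : 1 ≤ n) (hζ : IsPrimitiveRoot ζ n) {σ : projSym φ} (hσ : ∀ a, σ • pt a = pt (ζ * a))
    {a b : ℂ} (ha : a ≠ 0) (hb : b ≠ 0) (hab : a ^ n ≠ b ^ n)
    (h : pt a ∈ MulAction.orbit (projSym φ) (pt 0))
    (h' : pt b ∈ MulAction.orbit (projSym φ) (pt 0)) :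
    n * (n + n + 1) ≤ Nat.card (projSym φ) := by
  have h0 : (0 : ℂ) ∉ rotates ζ n a ∪ rotates ζ n b := fun h => by
    rcases Finset.mem_union.1 h with h | h
    · exact pow_ne_zero n ha (by rw [← pow_of_mem_rotates hζ h, zero_pow (by omega)])
    · exact pow_ne_zero n hb (by rw [← pow_of_mem_rotates hζ h, zero_pow (by omega)])
  have hdisj : Disjoint (rotates ζ n a) (rotates ζ n b) :=
    Finset.disjoint_left.2 fun z hz hz' => hab (by
      rw [← pow_of_mem_rotates hζ hz, pow_of_mem_rotates hζ hz'])
  have := le_card_projSym hζ hσ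
    (S := pt '' (insert 0 (rotates ζ n a ∪ rotates ζ n b) : Finset ℂ)) (by
      rintro _ ⟨z, hz, rfl⟩
      rcases Finset.mem_insert.1 hz with rfl | hz
      · exact MulAction.mem_orbit_self _
      · rcases Finset.mem_union.1 hz with hz | hz
        · exact pt_rotates_mem hσ h hz
        · exact pt_rotates_mem hσ h' hz)
  rwa [Set.ncard_image_of_injective _ pt_injective, Set.ncard_coe_finset,
    Finset.card_insert_of_notMem h0, Finset.card_union_of_disjoint hdisj, card_rotates hζ ha,
    card_rotates hζ hb] at this

theorem exists_mobius {φ : MvPolynomial (Fin 2) ℂ} {n : ℕ} (hn : 1 ≤ n)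
    (hφ : φ.IsHomogeneous n) {a b c d : ℂ} (hD : a * d - b * c ≠ 0) {k : ℂ} (hk : k ≠ 0)
    (h : ∀ x y, eval ![a * x + b * y, c * x + d * y] φ = k * eval ![x, y] φ) :
    ∃ γ : projSym φ, ∀ p : ℙ ℂ V2, γ • p = mobius a b c d hD • p := by
  refine exists_projSym hn hφ _ hk fun v => ?_
  have hv : v = ![v 0, v 1] := by ext i; fin_cases i <;> rfl
  rw [mobius_apply, h, ← hv]

theorem exists_rotation {φ : MvPolynomial (Fin 2) ℂ} {d : ℕ} (hd : 1 ≤ d)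
    (hφ : φ.IsHomogeneous d) {ζ : ℂ} (hζ : ζ ≠ 0) {c : ℂ} (hc : c ≠ 0)
    (h : ∀ x y, eval ![ζ * x, y] φ = c * eval ![x, y] φ) :
    ∃ σ : projSym φ, ∀ a, σ • pt a = pt (ζ * a) := by
  obtain ⟨σ, hσ⟩ := exists_mobius hd hφ (a := ζ) (b := 0) (c := 0) (d := 1)
    (by simpa using hζ) hc (by simpa using h)
  exact ⟨σ, fun a => by rw [hσ, mobius_smul_pt _ _ _ _ _ (by simp)]; simp⟩

theorem pt_mem_orbit {φ : MvPolynomial (Fin 2) ℂ} {a b c d : ℂ} {hD : a * d - b * c ≠ 0}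
    {γ : projSym φ} (hγ : ∀ p : ℙ ℂ V2, γ • p = mobius a b c d hD • p) {z : ℂ}
    (hz : pt z ∈ MulAction.orbit (projSym φ) (pt 0)) (h : c * z + d ≠ 0) :
    pt ((a * z + b) / (c * z + d)) ∈ MulAction.orbit (projSym φ) (pt 0) := by
  rw [← mobius_smul_pt a b c d hD h, ← hγ]
  exact MulAction.mem_orbit_of_mem_orbit γ hz

/-! ### The extremal forms -/

/-- The powers of a root of `r² + r = 1`, with coefficients the Fibonacci numbers up to sign. -/
theorem golden_pow {r : ℂ} (hr : r ^ 2 + r - 1 = 0) :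
    r ^ 2 = 1 - r ∧ r ^ 3 = 2 * r - 1 ∧ r ^ 4 = 2 - 3 * r ∧ r ^ 5 = 5 * r - 3 ∧ r ^ 6 = 5 - 8 * r ∧
    r ^ 7 = 13 * r - 8 ∧ r ^ 8 = 13 - 21 * r ∧ r ^ 9 = 34 * r - 21 ∧ r ^ 10 = 34 - 55 * r ∧
    r ^ 11 = 89 * r - 55 ∧ r ^ 12 = 89 - 144 * r ∧ r ^ 13 = 233 * r - 144 ∧ r ^ 14 = 233 - 377 * r ∧
    r ^ 15 = 610 * r - 377 ∧ r ^ 16 = 610 - 987 * r ∧ r ^ 17 = 1597 * r - 987 ∧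
    r ^ 18 = 1597 - 2584 * r ∧ r ^ 19 = 4181 * r - 2584 ∧ r ^ 20 = 4181 - 6765 * r := by
  have h2 : r ^ 2 = 1 - r := by linear_combination hr
  have h3 : r ^ 3 = 2 * r - 1 := by linear_combination r * h2 - 1 * h2
  have h4 : r ^ 4 = 2 - 3 * r := by linear_combination r * h3 + 2 * h2
  have h5 : r ^ 5 = 5 * r - 3 := by linear_combination r * h4 - 3 * h2
  have h6 : r ^ 6 = 5 - 8 * r := by linear_combination r * h5 + 5 * h2
  have h7 : r ^ 7 = 13 * r - 8 := by linear_combination r * h6 - 8 * h2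
  have h8 : r ^ 8 = 13 - 21 * r := by linear_combination r * h7 + 13 * h2
  have h9 : r ^ 9 = 34 * r - 21 := by linear_combination r * h8 - 21 * h2
  have h10 : r ^ 10 = 34 - 55 * r := by linear_combination r * h9 + 34 * h2
  have h11 : r ^ 11 = 89 * r - 55 := by linear_combination r * h10 - 55 * h2
  have h12 : r ^ 12 = 89 - 144 * r := by linear_combination r * h11 + 89 * h2
  have h13 : r ^ 13 = 233 * r - 144 := by linear_combination r * h12 - 144 * h2
  have h14 : r ^ 14 = 233 - 377 * r := by linear_combination r * h13 + 233 * h2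
  have h15 : r ^ 15 = 610 * r - 377 := by linear_combination r * h14 - 377 * h2
  have h16 : r ^ 16 = 610 - 987 * r := by linear_combination r * h15 + 610 * h2
  have h17 : r ^ 17 = 1597 * r - 987 := by linear_combination r * h16 - 987 * h2
  have h18 : r ^ 18 = 1597 - 2584 * r := by linear_combination r * h17 + 1597 * h2
  have h19 : r ^ 19 = 4181 * r - 2584 := by linear_combination r * h18 - 2584 * h2
  have h20 : r ^ 20 = 4181 - 6765 * r := by linear_combination r * h19 + 4181 * h2
  exact ⟨h2, h3, h4, h5, h6, h7, h8, h9, h10, h11, h12, h13, h14, h15, h16, h17, h18, h19, h20⟩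

/-- The reflection `(x, y) ↦ (-x + ry, rx + y)`, up to scaling, is a symmetry of the vertex form
of the icosahedron. -/
theorem icosa12 {r : ℂ} (hr : r ^ 2 + r - 1 = 0) (x y : ℂ) :
    (-x + r * y) * (r * x + y) * ((-x + r * y) ^ 10 + 11 * (-x + r * y) ^ 5 * (r * x + y) ^ 5 -
      (r * x + y) ^ 10) = (1 + r ^ 2) ^ 6 * (x * y * (x ^ 10 + 11 * x ^ 5 * y ^ 5 - y ^ 10)) := by
  obtain ⟨h2, h3, h4, h5, h6, h7, h8, h9, h10, h11, h12, -⟩ := golden_pow hr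
  ring_nf
  simp only [h2, h3, h4, h5, h6, h7, h8, h9, h10, h11, h12]
  ring

set_option maxRecDepth 20000 in
/-- The same map is a symmetry of the vertex form of the dodecahedron. -/
theorem icosa20 {r : ℂ} (hr : r ^ 2 + r - 1 = 0) (x y : ℂ) :
    (-x + r * y) ^ 20 + (r * x + y) ^ 20 -
        228 * ((-x + r * y) ^ 15 * (r * x + y) ^ 5 - (-x + r * y) ^ 5 * (r * x + y) ^ 15) +
        494 * (-x + r * y) ^ 10 * (r * x + y) ^ 10 =
      (1 + r ^ 2) ^ 10 *
        (x ^ 20 + y ^ 20 - 228 * (x ^ 15 * y ^ 5 - x ^ 5 * y ^ 15) + 494 * x ^ 10 * y ^ 10) := by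
  obtain ⟨h2, h3, h4, h5, h6, h7, h8, h9, h10, h11, h12, h13, h14, h15, h16, h17, h18, h19, h20⟩ :=
    golden_pow hr
  ring_nf
  simp only [h2, h3, h4, h5, h6, h7, h8, h9, h10, h11, h12, h13, h14, h15, h16, h17, h18, h19, h20]
  ring

theorem nonsing_of {φ : MvPolynomial (Fin 2) ℂ}
    (h : ∀ x y : ℂ, eval ![x, y] (pderiv 0 φ) = 0 → eval ![x, y] (pderiv 1 φ) = 0 →
      x = 0 ∧ y = 0) : Nonsing φ := by
  intro v hv
  by_contra! h0
  have hv' : v = ![v 0, v 1] := by ext i; fin_cases i <;> rfl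
  rw [hv'] at h0
  obtain ⟨h1, h2⟩ := h _ _ (h0 0) (h0 1)
  exact hv (by rw [hv', h1, h2]; ext i; fin_cases i <;> rfl)

theorem isHomogeneous_term (c : ℂ) (a b : ℕ) {n : ℕ} (h : a + b = n) :
    (C c * X 0 ^ a * X 1 ^ b : MvPolynomial (Fin 2) ℂ).IsHomogeneous n := by
  rw [← h]
  exact (by simpa using ((isHomogeneous_C _ c).mul (isHomogeneous_X_pow 0 a)) :
    (C c * X 0 ^ a : MvPolynomial (Fin 2) ℂ).IsHomogeneous a).mul (isHomogeneous_X_pow 1 b)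

theorem pderiv_term_zero (c : ℂ) (a b : ℕ) (x y : ℂ) :
    eval ![x, y] (pderiv 0 (C c * X 0 ^ a * X 1 ^ b : MvPolynomial (Fin 2) ℂ)) =
      c * (a * x ^ (a - 1)) * y ^ b := by
  simp [Derivation.leibniz, Derivation.leibniz_pow, pderiv_X]
  ring

theorem pderiv_term_one (c : ℂ) (a b : ℕ) (x y : ℂ) :
    eval ![x, y] (pderiv 1 (C c * X 0 ^ a * X 1 ^ b : MvPolynomial (Fin 2) ℂ)) =
      c * x ^ a * (b * y ^ (b - 1)) := by
  simp [Derivation.leibniz, Derivation.leibniz_pow, pderiv_X]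

theorem eval_term (c : ℂ) (a b : ℕ) (x y : ℂ) :
    eval ![x, y] (C c * X 0 ^ a * X 1 ^ b : MvPolynomial (Fin 2) ℂ) = c * x ^ a * y ^ b := by
  simp

/-- The form `x ^ d + y ^ d`, whose group contains the dihedral group of order `2d`. -/
theorem exists_form {d : ℕ} (hd : 3 ≤ d) : ∃ φ : MvPolynomial (Fin 2) ℂ,
    φ.IsHomogeneous d ∧ Nonsing φ ∧ 2 * d ≤ Nat.card (projSym φ) := by
  set φ : MvPolynomial (Fin 2) ℂ := C 1 * X 0 ^ d * X 1 ^ 0 + C 1 * X 0 ^ 0 * X 1 ^ d with hφdef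
  have hφ : φ.IsHomogeneous d :=
    (isHomogeneous_term _ _ _ (by omega)).add (isHomogeneous_term _ _ _ (by omega))
  have he : ∀ x y, eval ![x, y] φ = x ^ d + y ^ d := fun x y => by
    rw [hφdef, map_add, eval_term, eval_term]; ring
  have hs : Nonsing φ := nonsing_of fun x y h0 h1 => by
    rw [hφdef, map_add, map_add, pderiv_term_zero, pderiv_term_zero] at h0
    rw [hφdef, map_add, map_add, pderiv_term_one, pderiv_term_one] at h1
    simp [show d ≠ 0 by omega, show d - 1 ≠ 0 by omega] at h0 h1
    exact ⟨h0, h1⟩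
  have hfin := finite_projSym hd hφ (ncard_zeroPts (by omega) hφ hs)
  refine ⟨φ, hφ, hs, ?_⟩
  have hζ := Complex.isPrimitiveRoot_exp d (by omega)
  obtain ⟨σ, hσ⟩ := exists_rotation (by omega) hφ (hζ.ne_zero (by omega)) one_ne_zero
    (fun x y => by rw [he, he, mul_pow, hζ.pow_eq_one]; ring)
  obtain ⟨τ, hτ⟩ := exists_mobius (by omega) hφ (a := 0) (b := 1) (c := 1) (d := 0) (by norm_num)
    one_ne_zero (fun x y => by rw [he, he]; ring)
  have := le_card_projSym hζ hσ (S := {pt 0, ptInf}) (by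
    rintro p (rfl | rfl)
    · exact MulAction.mem_orbit_self _
    · exact ⟨τ, by
        change τ • pt 0 = ptInf
        rw [hτ, mobius_smul_pt_eq_inf _ _ _ _ _ (by simp)]⟩)
  rwa [Set.ncard_pair (ptInf_ne_pt 0).symm, mul_comm] at this

/-- The tetrahedral form `x (x³ - y³)`: the orbit of `0` contains `0` and the rotates of `1`. -/
theorem exists_form4 : ∃ φ : MvPolynomial (Fin 2) ℂ,
    φ.IsHomogeneous 4 ∧ Nonsing φ ∧ 2 * 4 < Nat.card (projSym φ) := by
  set φ : MvPolynomial (Fin 2) ℂ := C 1 * X 0 ^ 4 * X 1 ^ 0 + C (-1) * X 0 ^ 1 * X 1 ^ 3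
    with hφdef
  have hφ : φ.IsHomogeneous 4 :=
    (isHomogeneous_term _ _ _ (by omega)).add (isHomogeneous_term _ _ _ (by omega))
  have he : ∀ x y, eval ![x, y] φ = x * (x ^ 3 - y ^ 3) := fun x y => by
    rw [hφdef, map_add, eval_term, eval_term]; ring
  have hs : Nonsing φ := nonsing_of fun x y h0 h1 => by
    rw [hφdef, map_add, map_add, pderiv_term_zero, pderiv_term_zero] at h0
    rw [hφdef, map_add, map_add, pderiv_term_one, pderiv_term_one] at h1
    norm_num at h0 h1
    rcases h1 with rfl | rfl <;> simpa using h0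
  have hfin := finite_projSym (by omega) hφ (ncard_zeroPts (by omega) hφ hs)
  refine ⟨φ, hφ, hs, ?_⟩
  have hζ := Complex.isPrimitiveRoot_exp 3 (by omega)
  have hζ0 := hζ.ne_zero (by omega)
  obtain ⟨σ, hσ⟩ := exists_rotation (by omega) hφ hζ0 hζ0
    (fun x y => by rw [he, he, mul_pow, hζ.pow_eq_one]; ring)
  obtain ⟨τ, hτ⟩ := exists_mobius (by omega) hφ (a := -1) (b := 1) (c := 2) (d := 1) (by norm_num)
    (k := 9) (by norm_num) (fun x y => by rw [he, he]; ring)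
  have h1 := pt_mem_orbit hτ (MulAction.mem_orbit_self _) (by norm_num)
  have := le_card_of_one (by omega) hζ hσ (by norm_num) h1
  omega

/-- The octahedral form `x y (x⁴ - y⁴)`: the orbit of `0` contains `0` and the rotates of `-1`. -/
theorem exists_form6 : ∃ φ : MvPolynomial (Fin 2) ℂ,
    φ.IsHomogeneous 6 ∧ Nonsing φ ∧ 2 * 6 < Nat.card (projSym φ) := by
  set φ : MvPolynomial (Fin 2) ℂ := C 1 * X 0 ^ 5 * X 1 ^ 1 + C (-1) * X 0 ^ 1 * X 1 ^ 5
    with hφdef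
  have hφ : φ.IsHomogeneous 6 :=
    (isHomogeneous_term _ _ _ (by omega)).add (isHomogeneous_term _ _ _ (by omega))
  have he : ∀ x y, eval ![x, y] φ = x * y * (x ^ 4 - y ^ 4) := fun x y => by
    rw [hφdef, map_add, eval_term, eval_term]; ring
  have hs : Nonsing φ := nonsing_of fun x y h0 h1 => by
    rw [hφdef, map_add, map_add, pderiv_term_zero, pderiv_term_zero] at h0
    rw [hφdef, map_add, map_add, pderiv_term_one, pderiv_term_one] at h1
    norm_num at h0 h1
    have h2 : y * (5 * x ^ 4 - y ^ 4) = 0 := by linear_combination h0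
    have h3 : x * (x ^ 4 - 5 * y ^ 4) = 0 := by linear_combination h1
    rcases mul_eq_zero.1 h2 with rfl | h2
    · simpa using h3
    · rcases mul_eq_zero.1 h3 with rfl | h3
      · simpa using h2
      · have hx : 24 * x ^ 4 = 0 := by linear_combination 5 * h2 - h3
        have hy : 24 * y ^ 4 = 0 := by linear_combination h2 - 5 * h3
        exact ⟨by simpa using hx, by simpa using hy⟩
  have hfin := finite_projSym (by omega) hφ (ncard_zeroPts (by omega) hφ hs)
  refine ⟨φ, hφ, hs, ?_⟩
  have hζ := Complex.isPrimitiveRoot_exp 4 (by omega)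
  have hζ0 := hζ.ne_zero (by omega)
  obtain ⟨σ, hσ⟩ := exists_rotation (by omega) hφ hζ0 hζ0
    (fun x y => by rw [he, he, mul_pow, hζ.pow_eq_one]; ring)
  obtain ⟨τ, hτ⟩ := exists_mobius (by omega) hφ (a := 1) (b := 1) (c := 1) (d := -1) (by norm_num)
    (k := 8) (by norm_num) (fun x y => by rw [he, he]; ring)
  have h1 := pt_mem_orbit hτ (MulAction.mem_orbit_self _) (by norm_num)
  have := le_card_of_one (by omega) hζ hσ (by norm_num) h1
  omega

/-- The cube form `x⁸ + 14 x⁴ y⁴ + y⁸`, which has the same symmetries as the octahedral form. -/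
theorem exists_form8 : ∃ φ : MvPolynomial (Fin 2) ℂ,
    φ.IsHomogeneous 8 ∧ Nonsing φ ∧ 2 * 8 < Nat.card (projSym φ) := by
  set φ : MvPolynomial (Fin 2) ℂ := C 1 * X 0 ^ 8 * X 1 ^ 0 + C 14 * X 0 ^ 4 * X 1 ^ 4 +
    C 1 * X 0 ^ 0 * X 1 ^ 8 with hφdef
  have hφ : φ.IsHomogeneous 8 :=
    ((isHomogeneous_term _ _ _ (by omega)).add (isHomogeneous_term _ _ _ (by omega))).add
      (isHomogeneous_term _ _ _ (by omega))
  have he : ∀ x y, eval ![x, y] φ = x ^ 8 + 14 * x ^ 4 * y ^ 4 + y ^ 8 := fun x y => by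
    rw [hφdef, map_add, map_add, eval_term, eval_term, eval_term]; ring
  have hs : Nonsing φ := nonsing_of fun x y h0 h1 => by
    simp only [hφdef, map_add, pderiv_term_zero] at h0
    simp only [hφdef, map_add, pderiv_term_one] at h1
    norm_num at h0 h1
    have h2 : x ^ 3 * (x ^ 4 + 7 * y ^ 4) = 0 := by linear_combination h0 / 8
    have h3 : y ^ 3 * (7 * x ^ 4 + y ^ 4) = 0 := by linear_combination h1 / 8
    rcases mul_eq_zero.1 h2 with h2 | h2
    · obtain rfl : x = 0 := by simpa using h2
      simpa using h3
    · rcases mul_eq_zero.1 h3 with h3 | h3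
      · obtain rfl : y = 0 := by simpa using h3
        simpa using h2
      · have hx : 48 * x ^ 4 = 0 := by linear_combination 7 * h3 - h2
        have hy : 48 * y ^ 4 = 0 := by linear_combination 7 * h2 - h3
        exact ⟨by simpa using hx, by simpa using hy⟩
  have hfin := finite_projSym (by omega) hφ (ncard_zeroPts (by omega) hφ hs)
  refine ⟨φ, hφ, hs, ?_⟩
  have hζ := Complex.isPrimitiveRoot_exp 4 (by omega)
  have hζ0 := hζ.ne_zero (by omega)
  have hζ4 := hζ.pow_eq_one
  obtain ⟨σ, hσ⟩ := exists_rotation (by omega) hφ hζ0 one_ne_zero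
    (fun x y => by
      rw [he, he, mul_pow, mul_pow, show ∀ z : ℂ, z ^ 8 = (z ^ 4) ^ 2 by intro z; ring, hζ4]; ring)
  obtain ⟨τ, hτ⟩ := exists_mobius (by omega) hφ (a := 1) (b := 1) (c := 1) (d := -1) (by norm_num)
    (k := 16) (by norm_num) (fun x y => by rw [he, he]; ring)
  have h1 := pt_mem_orbit hτ (MulAction.mem_orbit_self _) (by norm_num)
  have := le_card_of_one (by omega) hζ hσ (by norm_num) h1
  omega

theorem exists_golden : ∃ s : ℝ, 0 < s ∧ s ^ 2 + s - 1 = 0 := by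
  have h5 : (√5) ^ 2 = 5 := Real.sq_sqrt (by norm_num)
  refine ⟨(√5 - 1) / 2, ?_, by linear_combination h5 / 4⟩
  have : 1 < √5 := Real.lt_sqrt_of_sq_lt (by norm_num)
  linarith

/-- The icosahedral form `x y (x¹⁰ + 11 x⁵ y⁵ - y¹⁰)`: the orbit of `0` contains `0` and the
rotates of the golden ratio conjugate `s`. -/
theorem exists_form12 : ∃ φ : MvPolynomial (Fin 2) ℂ,
    φ.IsHomogeneous 12 ∧ Nonsing φ ∧ 2 * 12 < Nat.card (projSym φ) := by
  set φ : MvPolynomial (Fin 2) ℂ := C 1 * X 0 ^ 11 * X 1 ^ 1 + C 11 * X 0 ^ 6 * X 1 ^ 6 +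
    C (-1) * X 0 ^ 1 * X 1 ^ 11 with hφdef
  have hφ : φ.IsHomogeneous 12 :=
    ((isHomogeneous_term _ _ _ (by omega)).add (isHomogeneous_term _ _ _ (by omega))).add
      (isHomogeneous_term _ _ _ (by omega))
  have he : ∀ x y, eval ![x, y] φ = x * y * (x ^ 10 + 11 * x ^ 5 * y ^ 5 - y ^ 10) :=
    fun x y => by
      rw [hφdef, map_add, map_add, eval_term, eval_term, eval_term]; ring
  have hs : Nonsing φ := nonsing_of fun x y h0 h1 => by
    simp only [hφdef, map_add, pderiv_term_zero] at h0
    simp only [hφdef, map_add, pderiv_term_one] at h1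
    norm_num at h0 h1
    have h2 : y * (11 * x ^ 10 + 66 * x ^ 5 * y ^ 5 - y ^ 10) = 0 := by linear_combination h0
    have h3 : x * (x ^ 10 + 66 * x ^ 5 * y ^ 5 - 11 * y ^ 10) = 0 := by linear_combination h1
    rcases mul_eq_zero.1 h2 with rfl | h2
    · simpa using h3
    · rcases mul_eq_zero.1 h3 with rfl | h3
      · simpa using h2
      · have h4 : x ^ 10 + y ^ 10 = 0 := by linear_combination (h2 - h3) / 10
        have h5 : x ^ 5 * (2 * x ^ 5 + 11 * y ^ 5) = 0 := by
          linear_combination (h2 + h4) / 6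
        have hx : x = 0 := by
          rcases mul_eq_zero.1 h5 with h5 | h5
          · simpa using h5
          · have : 125 * x ^ 10 = 0 := by
              linear_combination 121 * h4 + (2 * x ^ 5 - 11 * y ^ 5) * h5
            simpa using this
        subst hx
        exact ⟨rfl, by simpa using h4⟩
  have hfin := finite_projSym (by omega) hφ (ncard_zeroPts (by omega) hφ hs)
  refine ⟨φ, hφ, hs, ?_⟩
  have hζ := Complex.isPrimitiveRoot_exp 5 (by omega)
  have hζ0 := hζ.ne_zero (by omega)
  have hζ5 := hζ.pow_eq_one
  obtain ⟨σ, hσ⟩ := exists_rotation (by omega) hφ hζ0 hζ0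
    (fun x y => by
      rw [he, he, mul_pow, mul_pow, show ∀ z : ℂ, z ^ 10 = (z ^ 5) ^ 2 by intro z; ring, hζ5]
      ring)
  obtain ⟨s, hs0, hs1⟩ := exists_golden
  have hr : (s : ℂ) ^ 2 + s - 1 = 0 := by exact_mod_cast hs1
  have hr0 : (s : ℂ) ≠ 0 := by exact_mod_cast hs0.ne'
  have hdet : 1 + (s : ℂ) ^ 2 ≠ 0 := by exact_mod_cast (by positivity : 1 + s ^ 2 ≠ 0)
  obtain ⟨τ, hτ⟩ := exists_mobius (by omega) hφ (a := -1) (b := s) (c := s) (d := 1)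
    (by contrapose! hdet; linear_combination -hdet) (pow_ne_zero 6 hdet)
    (fun x y => by rw [he, he, ← icosa12 hr]; ring)
  have h1 := pt_mem_orbit hτ (MulAction.mem_orbit_self _) (by norm_num)
  have := le_card_of_one (by omega) hζ hσ (by simpa using hr0) h1
  omega

/-- The dodecahedral form `x²⁰ + y²⁰ - 228 (x¹⁵ y⁵ - x⁵ y¹⁵) + 494 x¹⁰ y¹⁰`. Six points of the
orbit of `0` only give the bound `30 < 2 * 20`, so the rotates of `-1 / s` are used as well. -/
theorem exists_form20 : ∃ φ : MvPolynomial (Fin 2) ℂ,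
    φ.IsHomogeneous 20 ∧ Nonsing φ ∧ 2 * 20 < Nat.card (projSym φ) := by
  set φ : MvPolynomial (Fin 2) ℂ := C 1 * X 0 ^ 20 * X 1 ^ 0 + C (-228) * X 0 ^ 15 * X 1 ^ 5 +
    C 494 * X 0 ^ 10 * X 1 ^ 10 + C 228 * X 0 ^ 5 * X 1 ^ 15 + C 1 * X 0 ^ 0 * X 1 ^ 20 with hφdef
  have hφ : φ.IsHomogeneous 20 :=
    ((((isHomogeneous_term _ _ _ (by omega)).add (isHomogeneous_term _ _ _ (by omega))).add
      (isHomogeneous_term _ _ _ (by omega))).add (isHomogeneous_term _ _ _ (by omega))).add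
      (isHomogeneous_term _ _ _ (by omega))
  have he : ∀ x y, eval ![x, y] φ =
      x ^ 20 + y ^ 20 - 228 * (x ^ 15 * y ^ 5 - x ^ 5 * y ^ 15) + 494 * x ^ 10 * y ^ 10 :=
    fun x y => by
      simp only [hφdef, map_add, eval_term]; ring
  have hs : Nonsing φ := nonsing_of fun x y h0 h1 => by
    simp only [hφdef, map_add, pderiv_term_zero] at h0
    simp only [hφdef, map_add, pderiv_term_one] at h1
    norm_num at h0 h1
    have h2 : x ^ 4 * (x ^ 15 - 171 * x ^ 10 * y ^ 5 + 247 * x ^ 5 * y ^ 10 + 57 * y ^ 15) = 0 := by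
      linear_combination h0 / 20
    have h3 : y ^ 4 * (-57 * x ^ 15 + 247 * x ^ 10 * y ^ 5 + 171 * x ^ 5 * y ^ 10 + y ^ 15) = 0 := by
      linear_combination h1 / 20
    rcases mul_eq_zero.1 h2 with h2 | h2
    · obtain rfl : x = 0 := by simpa using h2
      simpa using h3
    · rcases mul_eq_zero.1 h3 with h3 | h3
      · obtain rfl : y = 0 := by simpa using h3
        simpa using h2
      · -- the two cubics in `x⁵`, `y⁵` are coprime; the cofactors solve the Sylvester system
        have hx : 937500 * x ^ 25 = 0 := by
          linear_combination (-36117 * x ^ 10 - 22762 * x ^ 5 * y ^ 5 - 133 * y ^ 10) * h2 +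
            (-17081 * x ^ 10 + 33934 * x ^ 5 * y ^ 5 + 7581 * y ^ 10) * h3
        obtain rfl : x = 0 := by simpa using hx
        simpa using h3
  have hfin := finite_projSym (by omega) hφ (ncard_zeroPts (by omega) hφ hs)
  refine ⟨φ, hφ, hs, ?_⟩
  have hζ := Complex.isPrimitiveRoot_exp 5 (by omega)
  have hζ0 := hζ.ne_zero (by omega)
  have hζ5 := hζ.pow_eq_one
  obtain ⟨σ, hσ⟩ := exists_rotation (by omega) hφ hζ0 one_ne_zero
    (fun x y => by
      simp only [he, mul_pow, show ∀ z : ℂ, z ^ 10 = (z ^ 5) ^ 2 by intro z; ring,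
        show ∀ z : ℂ, z ^ 15 = (z ^ 5) ^ 3 by intro z; ring,
        show ∀ z : ℂ, z ^ 20 = (z ^ 5) ^ 4 by intro z; ring, hζ5]
      ring)
  obtain ⟨s, hs0, hs1⟩ := exists_golden
  have hr : (s : ℂ) ^ 2 + s - 1 = 0 := by exact_mod_cast hs1
  have hr0 : (s : ℂ) ≠ 0 := by exact_mod_cast hs0.ne'
  have hdet : 1 + (s : ℂ) ^ 2 ≠ 0 := by exact_mod_cast (by positivity : 1 + s ^ 2 ≠ 0)
  obtain ⟨τ, hτ⟩ := exists_mobius (by omega) hφ (a := -1) (b := s) (c := s) (d := 1)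
    (by contrapose! hdet; linear_combination -hdet) (pow_ne_zero 10 hdet)
    (fun x y => by rw [he, he, ← icosa20 hr]; simp only [neg_one_mul, one_mul])
  obtain ⟨ρ, hρ⟩ := exists_mobius (by omega) hφ (a := 0) (b := 1) (c := -1) (d := 0)
    (by norm_num) one_ne_zero (fun x y => by rw [he, he]; ring)
  have h1 := pt_mem_orbit hτ (MulAction.mem_orbit_self _) (by norm_num)
  have h2 := pt_mem_orbit hρ h1 (by simpa using hr0)
  have := le_card_of_two (by omega) hζ hσ (by simpa using hr0) (by simpa using hr0) ?_ h1 h2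
  · omega
  · -- the left side is positive and the right side is negative
    have h3 : s ^ 5 ≠ (-s⁻¹) ^ 5 := by
      have : 0 < s⁻¹ := by positivity
      have h4 : 0 < s ^ 5 + s⁻¹ ^ 5 := by positivity
      intro h5
      rw [Odd.neg_pow (by decide)] at h5
      linarith
    have h4 : (s : ℂ) ^ 5 ≠ (-(s : ℂ)⁻¹) ^ 5 := by exact_mod_cast h3
    convert h4 using 2
    · simp
    · simp [inv_neg]

/-- In every degree some form attains the bound; the exact order of its group follows from the
lower bound and `card_projSym`. -/
theorem exists_extremal {d : ℕ} (hd : 3 ≤ d) : ∃ φ : MvPolynomial (Fin 2) ℂ,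
    φ.IsHomogeneous d ∧ Nonsing φ ∧ d ^ 2 + d * Nat.card (projSym φ) = maxLines d := by
  have key : ∀ φ : MvPolynomial (Fin 2) ℂ, φ.IsHomogeneous d → Nonsing φ → _ :=
    fun φ h hs => card_projSym hd h (ncard_zeroPts (by omega) h hs)
  by_cases h : d = 4 ∨ d = 6 ∨ d = 8 ∨ d = 12 ∨ d = 20
  · obtain ⟨φ, h1, h2, h3⟩ : ∃ φ : MvPolynomial (Fin 2) ℂ,
        φ.IsHomogeneous d ∧ Nonsing φ ∧ 2 * d < Nat.card (projSym φ) := by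
      rcases h with rfl | rfl | rfl | rfl | rfl
      exacts [exists_form4, exists_form6, exists_form8, exists_form12, exists_form20]
    refine ⟨φ, h1, h2, ?_⟩
    rcases key φ h1 h2 with h4 | ⟨rfl, h4⟩ | ⟨rfl, h4⟩ | ⟨rfl, h4⟩ | ⟨rfl, h4⟩ | ⟨rfl, h4⟩
    · omega
    all_goals rw [h4]; rfl
  · obtain ⟨φ, h1, h2, h3⟩ := exists_form hd
    refine ⟨φ, h1, h2, ?_⟩
    have h4 : Nat.card (projSym φ) = 2 * d := by
      have := key φ h1 h2
      omega
    push Not at h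
    obtain ⟨h4', h6, h8, h12, h20⟩ := h
    rw [h4, maxLines, if_neg h4', if_neg h6, if_neg h8, if_neg h12, if_neg h20]
    ring

theorem card_le_maxLines {φ : MvPolynomial (Fin 2) ℂ} {d : ℕ} (hd : 3 ≤ d)
    (hφ : φ.IsHomogeneous d) (hs : Nonsing φ) :
    d ^ 2 + d * Nat.card (projSym φ) ≤ maxLines d := by
  rcases card_projSym hd hφ (ncard_zeroPts (by omega) hφ hs) with
    h | ⟨rfl, h⟩ | ⟨rfl, h⟩ | ⟨rfl, h⟩ | ⟨rfl, h⟩ | ⟨rfl, h⟩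
  · have h1 : d ^ 2 + d * Nat.card (projSym φ) ≤ 3 * d ^ 2 := by nlinarith
    refine h1.trans ?_
    unfold maxLines
    split_ifs with h4 h6 h8 h12 h20 <;> subst_vars <;> norm_num
  all_goals rw [h]; exact le_of_eq rfl

/-- For `d ≥ 3`: (i) every smooth surface `φ(x,y) - ψ(z,t) = 0` of degree `d` contains
at most `N_d` lines, and (ii) there exist binary forms `φ, ψ` of degree `d` for which the
surface is smooth and contains exactly `N_d` lines, where `N_d = 3d²` for
`d ∉ {4,6,8,12,20}` and `N_4 = 64`, `N_6 = 180`, `N_8 = 256`, `N_12 = 864`, `N_20 = 1600`. -/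
theorem maximal_number_of_lines_sepForm (d : ℕ) (hd : 3 ≤ d) :
    (∀ φ ψ : MvPolynomial (Fin 2) ℂ, φ.IsHomogeneous d → ψ.IsHomogeneous d →
      SmoothSurface (sepForm φ ψ) →
      Nat.card {W : Submodule ℂ (Fin 4 → ℂ) // IsLine W ∧ LiesOn (sepForm φ ψ) W} ≤
        maxLines d) ∧
    (∃ φ ψ : MvPolynomial (Fin 2) ℂ, φ.IsHomogeneous d ∧ ψ.IsHomogeneous d ∧
      SmoothSurface (sepForm φ ψ) ∧
      Nat.card {W : Submodule ℂ (Fin 4 → ℂ) // IsLine W ∧ LiesOn (sepForm φ ψ) W} =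
        maxLines d) := by
  refine ⟨fun φ ψ hφ hψ hs => ?_, ?_⟩
  · exact (card_lines_le hd hφ hψ hs).trans
      (card_le_maxLines hd hφ ((smooth_iff (by omega) hφ hψ).1 hs).1)
  · obtain ⟨φ, h1, h2, h3⟩ := exists_extremal hd
    exact ⟨φ, φ, h1, h1, (smooth_iff (by omega) h1 h1).2 ⟨h2, h2⟩,
      (card_lines_self hd h1 h2).trans h3⟩
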